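/- arXiv:math/0004149 — 2 statements merged into one kernel-verified Lean document; each statement's English description precedes it below -/
import Mathlib

section
/- For every ε > 0 there is a constant C > 0 such that for all integers N ≥ 1, q ≥ 1, a with gcd(a,q) = 1 and all real R ≥ 2, one has |Σ_{n ≤ N, n ≡ a (mod q)} λ_R(n)² − (N/φ(q))·(log R + c)| ≤ C·( (N/φ(q))·v(q) + (N/φ(q))·R^{−1/2+ε} + R² ). -/
open Finset ArithmeticFunction

/-- The Generalized Riemann Hypothesis for Dirichlet L-functions: every zero of a
Dirichlet L-function in the critical strip lies on the critical line. -/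
def GRH : Prop :=
  ∀ (N : ℕ) [NeZero N] (χ : DirichletCharacter ℂ N) (s : ℂ),
    DirichletCharacter.LFunction χ s = 0 → 0 < s.re → s.re < 1 → s.re = 1 / 2

/-- `ψ(x; q, a) = ∑_{n ≤ x, n ≡ a (mod q)} Λ(n)`. -/
noncomputable def psi (x : ℝ) (q a : ℕ) : ℝ :=
  ∑ n ∈ (Finset.Icc 1 ⌊x⌋₊).filter (fun n : ℕ => (n : ZMod q) = (a : ZMod q)),
    ArithmeticFunction.vonMangoldt n

/-- `I(x,h,q,a) = ∫_x^{2x} (ψ(y+h;q,a) − ψ(y;q,a) − h/φ(q))² dy`. -/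
noncomputable def momentI (x h : ℝ) (q a : ℕ) : ℝ :=
  ∫ y in x..(2 * x), (psi (y + h) q a - psi y q a - h / (q.totient : ℝ)) ^ 2

/-- `λ_R(n) = ∑_{r ≤ R} (μ²(r)/φ(r)) ∑_{d ∣ (r,n)} d·μ(d)`. -/
noncomputable def lamR (R : ℝ) (n : ℕ) : ℝ :=
  ∑ r ∈ Finset.Icc 1 ⌊R⌋₊,
    ((ArithmeticFunction.moebius r : ℝ) ^ 2 / (r.totient : ℝ)) *
      ∑ d ∈ (Nat.gcd r n).divisors, (d : ℝ) * (ArithmeticFunction.moebius d : ℝ)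

/-- `c = γ + ∑_p (log p)/(p(p−1))`. -/
noncomputable def cGY : ℝ :=
  Real.eulerMascheroniConstant +
    ∑' p : Nat.Primes, Real.log (p : ℕ) / (((p : ℕ) : ℝ) * (((p : ℕ) : ℝ) - 1))

/-- `v(k) = ∑_{p ∣ k} (log p)/p`. -/
noncomputable def vGY (k : ℕ) : ℝ := ∑ p ∈ k.primeFactors, Real.log p / (p : ℝ)

/-- `w(k) = ∏_{p ∣ k} (1 + 1/√p)`. -/
noncomputable def wGY (k : ℕ) : ℝ := ∏ p ∈ k.primeFactors, (1 + 1 / Real.sqrt p)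

/-- `g(k) = ∏_{p ∣ k} (1 + p/(p−1))`. -/
noncomputable def gGY (k : ℕ) : ℝ := ∏ p ∈ k.primeFactors, (1 + (p : ℝ) / ((p : ℝ) - 1))

/-- The twin prime constant `C = ∏_{p > 2} (1 − 1/(p−1)²)`. -/
noncomputable def twinC : ℝ :=
  ∏' p : Nat.Primes, (if 2 < (p : ℕ) then 1 - 1 / (((p : ℕ) : ℝ) - 1) ^ 2 else 1)

/-- The singular series `𝔖(k)`. -/
noncomputable def singSeries (k : ℕ) : ℝ :=
  if 2 ∣ k ∧ k ≠ 0 then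
    2 * twinC * ∏ p ∈ k.primeFactors.filter (fun p => 2 < p), ((p : ℝ) - 1) / ((p : ℝ) - 2)
  else 0

/-- `f(n,x,h)`, the length of the interval `[x,2x] ∩ [n−h,n)`. -/
noncomputable def flen (n : ℕ) (x h : ℝ) : ℝ :=
  if x ≤ n ∧ (n : ℝ) < x + h then (n : ℝ) - x
  else if x + h ≤ n ∧ (n : ℝ) ≤ 2 * x then h
  else if 2 * x < n ∧ (n : ℝ) ≤ 2 * x + h then 2 * x - n + h
  else 0

/-!
Put `G = μ² / φ`, `H(R) = ∑_{r ≤ R} G(r)` and `g_k(n) = ∑_{d ∣ (k,n)} d μ(d)`.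

*Asymptotics of `H`.* `G` is the Dirichlet convolution of `n ↦ 1 / n` with a multiplicative function
`b` whose series converges absolutely with weight `n ^ a` for every `a < 1 / 2`. Since
`∑ b(n) = 1` and `∑ b(n) log n = -∑_p log p / (p (p - 1))`, summing the harmonic sums gives
`H(R) = log R + c + O(R ^ (-a))`.

*Mean square.* On integers `n` coprime to `q`, `g_r(n)` depends only on the part `k` of `r` coprime
to `q`, so `λ_R(n) = ∑_k G(k) S_k g_k(n)` with `S_k = ∑_{s ∣ q, ks ≤ R} G(s)`. The `g_k` are nearly
orthogonal along the progression, `∑_n g_k(n) g_l(n) = (N / q) [k = l] φ(k) + O(σ(k) σ(l))`, and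
`∑_{r ≤ R} G(r) σ(r) = O(R)`, so the mean square is `(N / q) ∑_k G(k) S_k² + O(R²)`.

*Comparison with `H`.* Without truncation each `S_k` would be `∑_{s ∣ q} G(s) = q / φ(q)`, and
`∑_k G(k) S_k = H(R)`. The truncation costs at most
`(φ(q) / q) ∑_{s ∣ q} G(s) (H(R) - H(R / s)) ≪ (φ(q) / q) ∑_{s ∣ q} G(s) log s = v(q)`.
-/

open scoped ArithmeticFunction.Moebius ArithmeticFunction.zeta ArithmeticFunction.sigma Nat

/-! ### The weight `μ² / φ` as a Dirichlet convolution -/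

lemma summable_of_multiplicative_of_hasSum_prime_pow {g L A : ℕ → ℝ} (hg : ∀ n, 0 ≤ g n)
    (h0 : g 0 = 0) (h1 : g 1 = 1) (hmul : ∀ {m n : ℕ}, m.Coprime n → g (m * n) = g m * g n)
    (hlocal : ∀ p : ℕ, p.Prime → HasSum (fun k ↦ g (p ^ k)) (L p))
    (hle : ∀ p : ℕ, p.Prime → L p ≤ 1 + A p) (hA0 : ∀ n, 0 ≤ A n) (hA : Summable A) :
    Summable g := by
  refine summable_of_sum_range_le (c := Real.exp (∑' n, A n)) hg fun N ↦ ?_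
  obtain ⟨-, hsmooth⟩ := EulerProduct.summable_and_hasSum_smoothNumbers_prod_primesBelow_tsum
    h1 hmul (fun {p} hp ↦ (hlocal p hp).summable.norm) N
  have hprod : ∏ p ∈ N.primesBelow, ∑' k : ℕ, g (p ^ k) ≤ Real.exp (∑' n, A n) := calc
    ∏ p ∈ N.primesBelow, ∑' k : ℕ, g (p ^ k) ≤ ∏ p ∈ N.primesBelow, (1 + A p) := by
      refine prod_le_prod (fun p _ ↦ tsum_nonneg fun k ↦ hg _) fun p hp ↦ ?_
      have hp := Nat.prime_of_mem_primesBelow hp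
      exact (hlocal p hp).tsum_eq.trans_le (hle p hp)
    _ ≤ Real.exp (∑ p ∈ N.primesBelow, A p) := Real.prod_one_add_le_exp_sum _ hA0
    _ ≤ Real.exp (∑' n, A n) := Real.exp_le_exp.mpr (hA.sum_le_tsum _ fun i _ ↦ hA0 i)
  refine le_trans ?_ hprod
  have hind := (hasSum_subtype_iff_indicator (f := g)).mp hsmooth
  calc ∑ i ∈ range N, g i = ∑ i ∈ range N, (N.smoothNumbers).indicator g i := by
        refine sum_congr rfl fun i hi ↦ ?_
        rcases Nat.eq_zero_or_pos i with rfl | hi0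
        · simp [h0, Set.indicator_apply]
        · rw [Set.indicator_of_mem (Nat.mem_smoothNumbers_of_lt hi0 (mem_range.mp hi))]
    _ ≤ _ := sum_le_hasSum _ (fun i _ ↦ Set.indicator_nonneg (fun x _ ↦ hg x) i) hind

/-- The weight `μ²(n)/φ(n)` with which the divisor sums enter `lamR`. -/
noncomputable def totientWeight : ArithmeticFunction ℝ :=
  ⟨fun n ↦ (μ n : ℝ) ^ 2 / φ n, by simp⟩

lemma totientWeight_apply (n : ℕ) : totientWeight n = (μ n : ℝ) ^ 2 / φ n := rfl

lemma totientWeight_nonneg (n : ℕ) : 0 ≤ totientWeight n := by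
  rw [totientWeight_apply]; positivity

lemma isMultiplicative_totientWeight : totientWeight.IsMultiplicative := by
  refine ⟨by simp [totientWeight_apply], fun {m n} hmn ↦ ?_⟩
  simp only [totientWeight_apply, isMultiplicative_moebius.map_mul_of_coprime hmn,
    Nat.totient_mul hmn, Int.cast_mul, Nat.cast_mul]
  rw [mul_pow, mul_div_mul_comm]

lemma totientWeight_apply_prime {p : ℕ} (hp : p.Prime) :
    totientWeight p = 1 / ((p : ℝ) - 1) := by
  simp [totientWeight_apply, moebius_apply_prime hp, Nat.totient_prime hp, hp.one_le]

lemma totientWeight_eq_zero {n : ℕ} (hn : ¬ Squarefree n) : totientWeight n = 0 := by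
  simp [totientWeight_apply, moebius_eq_zero_of_not_squarefree hn]

lemma totientWeight_apply_prime_pow {p k : ℕ} (hp : p.Prime) (hk : 2 ≤ k) :
    totientWeight (p ^ k) = 0 :=
  totientWeight_eq_zero fun h ↦ by
    have := (Nat.squarefree_pow_iff hp.ne_one (by lia)).mp h
    lia

lemma totientWeight_of_squarefree {n : ℕ} (hn : Squarefree n) :
    totientWeight n = (φ n : ℝ)⁻¹ := by
  rw [totientWeight_apply, ← Int.cast_pow, moebius_sq_eq_one_of_squarefree hn, Int.cast_one,
    one_div]

/-- The arithmetic function `n ↦ 1/n`, whose partial sums are the harmonic numbers. -/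
noncomputable def natInv : ArithmeticFunction ℝ := ⟨fun n ↦ (n : ℝ)⁻¹, by simp⟩

lemma natInv_apply (n : ℕ) : natInv n = (n : ℝ)⁻¹ := rfl

lemma isMultiplicative_natInv : natInv.IsMultiplicative :=
  ⟨by simp [natInv_apply], fun _ ↦ by rw [natInv_apply, Nat.cast_mul, mul_inv]; rfl⟩

lemma pmul_moebius_natInv_mul_natInv :
    (μ : ArithmeticFunction ℝ).pmul natInv * natInv = 1 := by
  ext n
  have hterm : ∀ x ∈ n.divisorsAntidiagonal,
      (μ : ArithmeticFunction ℝ).pmul natInv x.1 * natInv x.2 = μ x.1 * natInv n := by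
    intro x hx
    rw [pmul_apply, mul_assoc, natInv_apply, natInv_apply, ← mul_inv, ← Nat.cast_mul,
      (Nat.mem_divisorsAntidiagonal.mp hx).1, intCoe_apply, natInv_apply]
  rw [mul_apply, sum_congr rfl hterm, ← sum_mul,
    Nat.sum_divisorsAntidiagonal (fun d _ ↦ (μ d : ℝ)), ← Int.cast_sum, ← coe_mul_zeta_apply,
    moebius_mul_coe_zeta, one_apply, one_apply]
  split_ifs with hn <;> simp [hn, natInv_apply]

/-- The Dirichlet quotient of `totientWeight` by `n ↦ 1/n`; being small on average, it transfers
the asymptotics of the harmonic numbers to the partial sums of `totientWeight`. -/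
noncomputable def weightCorrection : ArithmeticFunction ℝ :=
  (μ : ArithmeticFunction ℝ).pmul natInv * totientWeight

lemma weightCorrection_mul_natInv : weightCorrection * natInv = totientWeight := by
  rw [weightCorrection, mul_right_comm, pmul_moebius_natInv_mul_natInv, one_mul]

lemma isMultiplicative_weightCorrection : weightCorrection.IsMultiplicative :=
  (isMultiplicative_moebius.intCast.pmul isMultiplicative_natInv).mul
    isMultiplicative_totientWeight

lemma weightCorrection_apply_prime_pow_succ {p : ℕ} (hp : p.Prime) (k : ℕ) :
    weightCorrection (p ^ (k + 1)) = totientWeight (p ^ (k + 1)) - totientWeight (p ^ k) / p := by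
  rw [weightCorrection, mul_apply, Nat.sum_divisorsAntidiagonal
    (fun d e ↦ (μ : ArithmeticFunction ℝ).pmul natInv d * totientWeight e),
    Nat.sum_divisors_prime_pow hp, sum_range_succ', sum_range_succ', sum_eq_zero, pow_succ p k]
  · simp [natInv_apply, moebius_apply_prime hp, Nat.mul_div_cancel _ hp.pos]
    ring
  · intro i _
    simp [moebius_apply_prime_pow hp (show i + 1 + 1 ≠ 0 by lia)]

lemma weightCorrection_apply_prime {p : ℕ} (hp : p.Prime) :
    weightCorrection p = 1 / ((p : ℝ) * (p - 1)) := by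
  have h := weightCorrection_apply_prime_pow_succ hp 0
  have hp1 : (p : ℝ) - 1 ≠ 0 := sub_ne_zero.mpr (mod_cast hp.ne_one)
  have hp0 : (p : ℝ) ≠ 0 := mod_cast hp.ne_zero
  rw [zero_add, pow_one, pow_zero, totientWeight_apply_prime hp,
    isMultiplicative_totientWeight.map_one] at h
  rw [h]
  field

lemma weightCorrection_apply_prime_sq {p : ℕ} (hp : p.Prime) :
    weightCorrection (p ^ 2) = -(1 / ((p : ℝ) * (p - 1))) := by
  rw [weightCorrection_apply_prime_pow_succ hp, totientWeight_apply_prime_pow hp le_rfl, pow_one,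
    totientWeight_apply_prime hp, zero_sub, div_div, mul_comm]

lemma weightCorrection_apply_prime_pow {p k : ℕ} (hp : p.Prime) (hk : 3 ≤ k) :
    weightCorrection (p ^ k) = 0 := by
  obtain ⟨j, rfl⟩ := Nat.exists_eq_add_of_le' (one_le_two.trans (Nat.le_of_succ_le hk))
  rw [weightCorrection_apply_prime_pow_succ hp, totientWeight_apply_prime_pow hp (by lia),
    totientWeight_apply_prime_pow hp (by lia), zero_div, sub_zero]

lemma hasSum_of_eq_zero_of_three_le {F : ℕ → ℝ} (hF : ∀ k, 3 ≤ k → F k = 0) :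
    HasSum F (F 0 + F 1 + F 2) := by
  have hsum : HasSum F (∑ k ∈ range 3, F k) :=
    hasSum_sum_of_ne_finset_zero fun k hk ↦ hF k (by simpa using hk)
  simpa only [sum_range_succ, range_zero, sum_empty, zero_add] using hsum

lemma one_div_mul_sub_one_le {x : ℝ} (hx : 2 ≤ x) : 1 / (x * (x - 1)) ≤ 2 * x ^ (-2 : ℝ) := by
  rw [Real.rpow_neg (by linarith), Real.rpow_two, ← div_eq_mul_inv,
    div_le_div_iff₀ (by nlinarith) (by positivity)]
  nlinarith

lemma summable_abs_weightCorrection_mul_rpow {a : ℝ} (ha0 : 0 ≤ a) (ha : a < 1 / 2) :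
    Summable fun d : ℕ ↦ |weightCorrection d| * (d : ℝ) ^ a := by
  refine summable_of_multiplicative_of_hasSum_prime_pow
    (A := fun n ↦ 4 * (n : ℝ) ^ (2 * a - 2)) (fun d ↦ by positivity) (by simp)
    (by simp [isMultiplicative_weightCorrection.map_one]) (fun {m n} hmn ↦ ?_)
    (fun p hp ↦ hasSum_of_eq_zero_of_three_le fun k hk ↦ by
      simp [weightCorrection_apply_prime_pow hp hk])
    (fun p hp ↦ ?_) (fun n ↦ by positivity)
    ((Real.summable_nat_rpow.mpr (by linarith)).mul_left 4)
  · rw [isMultiplicative_weightCorrection.map_mul_of_coprime hmn, abs_mul, Nat.cast_mul,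
      Real.mul_rpow (by positivity) (by positivity), mul_mul_mul_comm]
  · have hp2 : (2 : ℝ) ≤ p := mod_cast hp.two_le
    have hlocal := one_div_mul_sub_one_le hp2
    have hlocal0 : 0 ≤ 1 / ((p : ℝ) * (p - 1)) := one_div_nonneg.mpr (by nlinarith)
    have hpow : (p : ℝ) ^ (2 * a) = ((p ^ 2 : ℕ) : ℝ) ^ a := by
      rw [Nat.cast_pow, ← Real.rpow_two, ← Real.rpow_mul (by linarith)]
    have hle : (p : ℝ) ^ a ≤ (p : ℝ) ^ (2 * a) :=
      Real.rpow_le_rpow_of_exponent_le (by linarith) (by linarith)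
    rw [pow_zero, pow_one, isMultiplicative_weightCorrection.map_one, Nat.cast_one,
      Real.one_rpow, abs_one, mul_one, weightCorrection_apply_prime hp,
      weightCorrection_apply_prime_sq hp, abs_neg, abs_of_nonneg hlocal0, ← hpow, add_assoc]
    gcongr
    calc _ ≤ 1 / ((p : ℝ) * (p - 1)) * p ^ (2 * a) + 1 / ((p : ℝ) * (p - 1)) * p ^ (2 * a) := by
          gcongr
      _ ≤ 2 * (p : ℝ) ^ (-2 : ℝ) * p ^ (2 * a) + 2 * (p : ℝ) ^ (-2 : ℝ) * p ^ (2 * a) := by gcongr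
      _ = 4 * (p : ℝ) ^ (2 * a - 2) := by
          rw [sub_eq_add_neg, Real.rpow_add (by linarith)]
          ring

lemma summable_totientWeight_div : Summable fun n : ℕ ↦ totientWeight n / n := by
  refine summable_of_multiplicative_of_hasSum_prime_pow
    (A := fun n ↦ 2 * (n : ℝ) ^ (-2 : ℝ))
    (fun n ↦ div_nonneg (totientWeight_nonneg n) n.cast_nonneg) (by simp)
    (by simp [isMultiplicative_totientWeight.map_one]) (fun {m n} hmn ↦ ?_)
    (fun p hp ↦ hasSum_of_eq_zero_of_three_le fun k hk ↦ by
      simp [totientWeight_apply_prime_pow hp (show 2 ≤ k by lia)])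
    (fun p hp ↦ ?_) (fun n ↦ by positivity)
    ((Real.summable_nat_rpow.mpr (by norm_num)).mul_left 2)
  · rw [isMultiplicative_totientWeight.map_mul_of_coprime hmn, Nat.cast_mul, mul_div_mul_comm]
  · rw [pow_zero, pow_one, isMultiplicative_totientWeight.map_one, totientWeight_apply_prime hp,
      totientWeight_apply_prime_pow hp le_rfl, zero_div, add_zero, Nat.cast_one, div_one, div_div,
      mul_comm]
    gcongr
    exact one_div_mul_sub_one_le (mod_cast hp.two_le)

lemma summable_abs_weightCorrection : Summable fun d : ℕ ↦ |weightCorrection d| := by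
  simpa only [Real.rpow_zero, mul_one] using
    summable_abs_weightCorrection_mul_rpow le_rfl one_half_pos

lemma summable_abs_weightCorrection_mul_log :
    Summable fun d : ℕ ↦ |weightCorrection d| * Real.log d := by
  refine .of_nonneg_of_le (fun d ↦ mul_nonneg (abs_nonneg _) (Real.log_natCast_nonneg d))
    (fun d ↦ ?_) ((summable_abs_weightCorrection_mul_rpow (a := 1 / 4)
      (by norm_num) (by norm_num)).mul_left 4)
  have hlog := Real.log_le_rpow_div d.cast_nonneg (show (0 : ℝ) < 1 / 4 by norm_num)
  calc |weightCorrection d| * Real.log d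
      ≤ |weightCorrection d| * ((d : ℝ) ^ (1 / 4 : ℝ) / (1 / 4)) := by gcongr
    _ = 4 * (|weightCorrection d| * (d : ℝ) ^ (1 / 4 : ℝ)) := by ring

lemma weightCorrection_eq_zero {p d : ℕ} (hp : p.Prime) (hd : 3 ≤ d.factorization p) :
    weightCorrection d = 0 := by
  have hd0 : d ≠ 0 := by rintro rfl; simp at hd
  rw [← Nat.ordProj_mul_ordCompl_eq_self d p,
    isMultiplicative_weightCorrection.map_mul_of_coprime
      ((Nat.coprime_ordCompl hp hd0).pow_left _),
    weightCorrection_apply_prime_pow hp hd, zero_mul]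

lemma summable_abs_weightCorrection_mul_comp_factorization {p : ℕ} (hp : p.Prime) (w : ℕ → ℝ) :
    Summable fun d : ℕ ↦ ‖weightCorrection d * w (d.factorization p)‖ := by
  refine .of_nonneg_of_le (fun d ↦ norm_nonneg _) (fun d ↦ ?_)
    (summable_abs_weightCorrection.mul_right (∑ j ∈ range 3, |w j|))
  rw [norm_mul, Real.norm_eq_abs, Real.norm_eq_abs]
  rcases lt_or_ge (d.factorization p) 3 with hd | hd
  · gcongr
    exact single_le_sum (f := fun j ↦ |w j|) (fun j _ ↦ abs_nonneg _) (mem_range.mpr hd)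
  · simp [weightCorrection_eq_zero hp hd]

-- Every Euler factor of `weightCorrection` is `1`, so only the twisted factor at `p` survives.
lemma hasSum_weightCorrection_mul_comp_factorization {p : ℕ} (hp : p.Prime) {w : ℕ → ℝ}
    (hw : w 0 = 1) :
    HasSum (fun d : ℕ ↦ weightCorrection d * w (d.factorization p))
      (1 + (w 1 - w 2) / (p * (p - 1))) := by
  set F : ℕ → ℝ := fun d ↦ weightCorrection d * w (d.factorization p) with hF
  have hsum : Summable (‖F ·‖) := summable_abs_weightCorrection_mul_comp_factorization hp w
  have hmul {m n : ℕ} (hmn : m.Coprime n) : F (m * n) = F m * F n := by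
    have hor : m.factorization p = 0 ∨ n.factorization p = 0 := by
      by_contra! h
      exact hp.not_dvd_one (hmn ▸ Nat.dvd_gcd (Nat.dvd_of_factorization_pos h.1)
        (Nat.dvd_of_factorization_pos h.2))
    simp only [hF, Nat.factorization_mul_apply_of_coprime hmn,
      isMultiplicative_weightCorrection.map_mul_of_coprime hmn]
    rcases hor with h | h <;> rw [h] <;> simp only [zero_add, add_zero, hw] <;> ring
  have hone : F 1 = 1 := by simp [hF, hw, isMultiplicative_weightCorrection.map_one]
  have hlocal {r : ℕ} (hr : r.Prime) : ∑' e, F (r ^ e) = 1 + F r + F (r ^ 2) := by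
    have := hasSum_of_eq_zero_of_three_le (F := fun e ↦ F (r ^ e)) fun k hk ↦ by
      simp only [hF, weightCorrection_apply_prime_pow hr hk, zero_mul]
    simpa only [pow_zero, pow_one, hone] using this.tsum_eq
  have hprod := EulerProduct.eulerProduct_hasProd hone hmul hsum (by simp [hF])
  have hsingle := hasProd_single (f := fun r : Nat.Primes ↦ ∑' e, F (r ^ e)) ⟨p, hp⟩ fun r hr ↦ by
    have hrp : (r : ℕ) ≠ p := fun h ↦ hr (Subtype.ext h)
    rw [hlocal r.2]
    simp [hF, r.2.factorization, hrp, hw, weightCorrection_apply_prime r.2,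
      weightCorrection_apply_prime_sq r.2]
  have hvalue : ∑' d, F d = 1 + (w 1 - w 2) / (p * (p - 1)) := by
    rw [hprod.unique hsingle, hlocal hp]
    simp only [hF, hp.factorization_self, hp.factorization_pow, Finsupp.single_eq_same,
      weightCorrection_apply_prime hp, weightCorrection_apply_prime_sq hp]
    ring
  exact hvalue ▸ hsum.of_norm.hasSum

lemma hasSum_weightCorrection : HasSum (fun d : ℕ ↦ weightCorrection d) 1 := by
  simpa using hasSum_weightCorrection_mul_comp_factorization Nat.prime_two (w := fun _ ↦ 1) rfl

lemma hasSum_weightCorrection_mul_factorization {p : ℕ} (hp : p.Prime) :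
    HasSum (fun d : ℕ ↦ weightCorrection d * d.factorization p) (-(1 / (p * (p - 1)))) := by
  have h := (hasSum_weightCorrection_mul_comp_factorization hp (w := fun j ↦ 1 + j)
    (by simp)).sub hasSum_weightCorrection
  simp only [mul_add, mul_one, add_sub_cancel_left] at h
  have hvalue : (1 + ((1 : ℕ) : ℝ) - (1 + (2 : ℕ))) / (p * (p - 1)) =
      -(1 / ((p : ℝ) * (p - 1))) := by
    push_cast
    ring
  rwa [hvalue] at h

lemma hasSum_factorization_mul_log (d : ℕ) :
    HasSum (fun p : Nat.Primes ↦ (d.factorization p : ℝ) * Real.log p) (Real.log d) := by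
  have h : HasSum (fun p : ℕ ↦ (d.factorization p : ℝ) * Real.log p) (Real.log d) := by
    rw [Real.log_nat_eq_sum_factorization]
    exact hasSum_sum_of_ne_finset_zero fun p hp ↦ by simp [Finsupp.notMem_support_iff.mp hp]
  refine (hasSum_subtype_iff_of_support_subset (s := {p : ℕ | p.Prime}) fun p hp ↦ ?_).mpr h
  by_contra hprime
  simp [Nat.factorization_eq_zero_of_not_prime d hprime] at hp

lemma hasSum_weightCorrection_mul_log :
    HasSum (fun d : ℕ ↦ weightCorrection d * Real.log d)
      (-∑' p : Nat.Primes, Real.log p / ((p : ℝ) * (p - 1))) := by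
  let F : ℕ × Nat.Primes → ℝ := fun x ↦
    weightCorrection x.1 * (x.1.factorization x.2 * Real.log x.2)
  have hrow (d : ℕ) : HasSum (fun p ↦ F (d, p)) (weightCorrection d * Real.log d) :=
    (hasSum_factorization_mul_log d).mul_left (weightCorrection d)
  have hcol (p : Nat.Primes) :
      HasSum (fun d ↦ F (d, p)) (-(Real.log p / ((p : ℝ) * (p - 1)))) := by
    have h := (hasSum_weightCorrection_mul_factorization p.2).mul_right (Real.log p)
    simp only [mul_assoc, neg_mul, one_div_mul_eq_div] at h
    exact h
  have hnorm (x : ℕ × Nat.Primes) :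
      ‖F x‖ = |weightCorrection x.1| * (x.1.factorization x.2 * Real.log x.2) := by
    rw [norm_mul, Real.norm_eq_abs,
      Real.norm_of_nonneg (mul_nonneg (Nat.cast_nonneg _) (Real.log_natCast_nonneg _))]
  have hF : Summable F := by
    refine .of_norm ((summable_prod_of_nonneg fun x ↦ norm_nonneg (F x)).mpr ⟨fun d ↦ ?_, ?_⟩)
    · exact (hrow d).summable.norm
    · refine summable_abs_weightCorrection_mul_log.congr fun d ↦ ?_
      simp only [hnorm]
      exact ((hasSum_factorization_mul_log d).mul_left _).tsum_eq.symm
  have hcols := ((Equiv.prodComm Nat.Primes ℕ).hasSum_iff.mpr hF.hasSum).prod_fiberwise hcol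
  rw [← tsum_neg, hcols.tsum_eq]
  exact hF.hasSum.prod_fiberwise hrow

/-! ### Partial sums of the weight -/

lemma abs_harmonic_floor_sub_log_sub_le_two_div {y : ℝ} (hy : 1 ≤ y) :
    |(harmonic ⌊y⌋₊ : ℝ) - Real.log y - Real.eulerMascheroniConstant| ≤ 2 / y := by
  have hfloor : 1 ≤ ⌊y⌋₊ := (Nat.one_le_floor_iff y).mpr hy
  have hfloor' : (1 : ℝ) ≤ ⌊y⌋₊ := mod_cast hfloor
  have hle : (⌊y⌋₊ : ℝ) ≤ y := Nat.floor_le (by linarith)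
  have hlt : y < ⌊y⌋₊ + 1 := Nat.lt_floor_add_one y
  have hlower := Real.eulerMascheroniSeq_lt_eulerMascheroniConstant ⌊y⌋₊
  have hupper := Real.eulerMascheroniConstant_lt_eulerMascheroniSeq' ⌊y⌋₊
  rw [Real.eulerMascheroniSeq] at hlower
  rw [Real.eulerMascheroniSeq', if_neg (by lia)] at hupper
  have hlog_succ : Real.log (⌊y⌋₊ + 1) - Real.log y ≤ 2 / y := by
    rw [← Real.log_div (by positivity) (by positivity)]
    refine (Real.log_le_sub_one_of_pos (by positivity)).trans ?_
    rw [div_sub_one (by positivity)]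
    gcongr
    linarith
  have hlog_floor : Real.log y - Real.log ⌊y⌋₊ ≤ 2 / y := by
    rw [← Real.log_div (by positivity) (by positivity)]
    refine (Real.log_le_sub_one_of_pos (by positivity)).trans ?_
    rw [div_sub_one (by positivity), div_le_div_iff₀ (by positivity) (by positivity)]
    nlinarith
  rw [abs_le]
  constructor <;> linarith

lemma abs_harmonic_floor_sub_log_sub_le {a y : ℝ} (ha0 : 0 < a) (ha1 : a ≤ 1) (hy : 0 < y) :
    |(harmonic ⌊y⌋₊ : ℝ) - Real.log y - Real.eulerMascheroniConstant|
      ≤ (2 + 1 / a) * y ^ (-a) := by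
  have hinv : 0 < 1 / a := by positivity
  rcases le_or_gt 1 y with hy1 | hy1
  · calc _ ≤ 2 / y := abs_harmonic_floor_sub_log_sub_le_two_div hy1
      _ = 2 * y ^ (-1 : ℝ) := by rw [Real.rpow_neg_one, div_eq_mul_inv]
      _ ≤ (2 + 1 / a) * y ^ (-a) := by gcongr; linarith
  · have hone : 1 ≤ y ^ (-a) :=
      Real.one_le_rpow_of_pos_of_le_one_of_nonpos hy hy1.le (by linarith)
    have hlog : -Real.log y ≤ y ^ (-a) / a := by
      simpa only [Real.log_inv, Real.inv_rpow hy.le, Real.rpow_neg hy.le] using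
        Real.log_le_rpow_div (inv_nonneg.mpr hy.le) ha0
    have hlog0 : Real.log y ≤ 0 := Real.log_nonpos hy.le hy1.le
    have hγ0 := Real.one_half_lt_eulerMascheroniConstant
    have hγ1 := Real.eulerMascheroniConstant_lt_two_thirds
    have hexpand : (2 + 1 / a) * y ^ (-a) = 2 * y ^ (-a) + y ^ (-a) / a := by ring
    rw [Nat.floor_eq_zero.mpr hy1, harmonic_zero, Rat.cast_zero, zero_sub, hexpand, abs_le]
    constructor <;> linarith

lemma sum_totientWeight_eq_sum_weightCorrection_mul_harmonic (M : ℕ) :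
    ∑ r ∈ Ioc 0 M, totientWeight r = ∑ d ∈ Ioc 0 M, weightCorrection d * harmonic (M / d) := by
  have hharmonic (m : ℕ) : (harmonic m : ℝ) = ∑ n ∈ Ioc 0 m, natInv n := by
    rw [harmonic_eq_sum_Icc, Rat.cast_sum]
    exact sum_congr rfl fun n _ ↦ by simp [natInv_apply]
  simp only [hharmonic]
  rw [← sum_Ioc_mul_eq_sum_sum, weightCorrection_mul_natInv]

lemma hasSum_weightCorrection_mul_harmonic_floor (R : ℝ) :
    HasSum (fun d : ℕ ↦ weightCorrection d * harmonic ⌊R / d⌋₊)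
      (∑ r ∈ Ioc 0 ⌊R⌋₊, totientWeight r) := by
  simp only [sum_totientWeight_eq_sum_weightCorrection_mul_harmonic, Nat.floor_div_natCast]
  refine hasSum_sum_of_ne_finset_zero fun d hd ↦ ?_
  rcases Nat.eq_zero_or_pos d with rfl | hd0
  · simp
  · have hlt : ⌊R⌋₊ < d := by
      by_contra! hle
      exact hd (mem_Ioc.mpr ⟨hd0, hle⟩)
    simp [Nat.div_eq_of_lt hlt]

lemma hasSum_weightCorrection_mul_log_div_add {R : ℝ} (hR : 0 < R) :
    HasSum (fun d : ℕ ↦ weightCorrection d * (Real.log (R / d) + Real.eulerMascheroniConstant))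
      (Real.log R + cGY) := by
  have h := (hasSum_weightCorrection.mul_right
    (Real.log R + Real.eulerMascheroniConstant)).sub hasSum_weightCorrection_mul_log
  rw [one_mul, sub_neg_eq_add, add_assoc] at h
  refine h.congr_fun fun d ↦ ?_
  rcases Nat.eq_zero_or_pos d with rfl | hd0
  · simp
  · rw [Real.log_div hR.ne' (by positivity)]
    ring

theorem exists_abs_sum_totientWeight_sub_log_le {a : ℝ} (ha0 : 0 < a) (ha : a < 1 / 2) :
    ∃ C : ℝ, 0 < C ∧ ∀ R : ℝ, 0 < R →
      |∑ r ∈ Ioc 0 ⌊R⌋₊, totientWeight r - (Real.log R + cGY)| ≤ C * R ^ (-a) := by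
  have hK := summable_abs_weightCorrection_mul_rpow ha0.le ha
  set K := ∑' d : ℕ, |weightCorrection d| * (d : ℝ) ^ a
  have hK0 : 0 ≤ K := tsum_nonneg fun d ↦ by positivity
  refine ⟨(2 + 1 / a) * (K + 1), mul_pos (by positivity) (add_pos_of_nonneg_of_pos hK0 one_pos),
    fun R hR ↦ ?_⟩
  have hdiff := (hasSum_weightCorrection_mul_harmonic_floor R).sub
    (hasSum_weightCorrection_mul_log_div_add hR)
  have hterm (d : ℕ) : ‖weightCorrection d * harmonic ⌊R / d⌋₊
      - weightCorrection d * (Real.log (R / d) + Real.eulerMascheroniConstant)‖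
      ≤ (2 + 1 / a) * R ^ (-a) * (|weightCorrection d| * (d : ℝ) ^ a) := by
    rcases Nat.eq_zero_or_pos d with rfl | hd0
    · simp
    have hrpow : (R / d) ^ (-a) = R ^ (-a) * (d : ℝ) ^ a := by
      rw [Real.div_rpow hR.le d.cast_nonneg, Real.rpow_neg d.cast_nonneg, div_inv_eq_mul]
    rw [← mul_sub, norm_mul, Real.norm_eq_abs, Real.norm_eq_abs, ← sub_sub]
    calc _ ≤ |weightCorrection d| * ((2 + 1 / a) * (R / d) ^ (-a)) := by
          gcongr
          exact abs_harmonic_floor_sub_log_sub_le ha0 (by linarith) (by positivity)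
      _ = _ := by rw [hrpow]; ring
  have hbound := tsum_of_norm_bounded (hK.hasSum.mul_left ((2 + 1 / a) * R ^ (-a))) hterm
  rw [hdiff.tsum_eq, Real.norm_eq_abs] at hbound
  calc _ ≤ (2 + 1 / a) * R ^ (-a) * K := hbound
    _ ≤ (2 + 1 / a) * R ^ (-a) * (K + 1) := by gcongr; linarith
    _ = _ := by ring

lemma exists_abs_sum_totientWeight_sub_log_le_const :
    ∃ K : ℝ, 0 < K ∧ ∀ x : ℝ, 1 ≤ x → |∑ r ∈ Ioc 0 ⌊x⌋₊, totientWeight r - Real.log x| ≤ K := by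
  obtain ⟨C, hC0, hC⟩ :=
    exists_abs_sum_totientWeight_sub_log_le (a := 1 / 4) (by norm_num) (by norm_num)
  refine ⟨C + |cGY|, by positivity, fun x hx ↦ ?_⟩
  have hx' : x ^ (-(1 / 4) : ℝ) ≤ 1 := Real.rpow_le_one_of_one_le_of_nonpos hx (by norm_num)
  calc |∑ r ∈ Ioc 0 ⌊x⌋₊, totientWeight r - Real.log x|
      = |∑ r ∈ Ioc 0 ⌊x⌋₊, totientWeight r - (Real.log x + cGY) + cGY| := by ring_nf
    _ ≤ C * x ^ (-(1 / 4) : ℝ) + |cGY| :=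
        (abs_add_le _ _).trans (by gcongr; exact hC x (by linarith))
    _ ≤ C + |cGY| := by gcongr; exact mul_le_of_le_one_right hC0.le hx'

lemma filter_lt_mul_Ioc_zero (M : ℕ) {s : ℕ} (hs : 0 < s) :
    {r ∈ Ioc 0 M | M < r * s} = Ioc (M / s) M := by
  ext r
  rw [mem_filter, mem_Ioc, mem_Ioc, Nat.div_lt_iff_lt_mul hs]
  refine ⟨fun h ↦ ⟨h.2, h.1.2⟩, fun h ↦ ⟨⟨Nat.pos_of_ne_zero ?_, h.2⟩, h.1⟩⟩
  rintro rfl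
  simp at h

lemma exists_sum_totientWeight_tail_le :
    ∃ C : ℝ, 0 < C ∧ ∀ M s : ℕ, 0 < s →
      ∑ r ∈ Ioc 0 M with M < r * s, totientWeight r ≤ C * Real.log s := by
  obtain ⟨K, hK0, hK⟩ := exists_abs_sum_totientWeight_sub_log_le_const
  refine ⟨1 + 2 * K / Real.log 2, by positivity, fun M s hs ↦ ?_⟩
  rcases Nat.eq_zero_or_pos M with rfl | hM
  · simpa using mul_nonneg (by positivity) (Real.log_natCast_nonneg s)
  rw [filter_lt_mul_Ioc_zero M hs]
  rcases (Nat.succ_le_iff.mpr hs).eq_or_lt with rfl | hs2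
  · simp
  have hM1 : (1 : ℝ) ≤ M := mod_cast hM
  have hsplit := sum_Ioc_consecutive totientWeight (Nat.zero_le _) (Nat.div_le_self M s)
  have hupper := (abs_le.mp (hK M hM1)).2
  have hlower : Real.log M - Real.log s - K ≤ ∑ r ∈ Ioc 0 (M / s), totientWeight r := by
    rw [← Real.log_div (by positivity) (by positivity)]
    rcases le_or_gt 1 ((M : ℝ) / s) with h1 | h1
    · have := (abs_le.mp (hK _ h1)).1
      rw [Nat.floor_div_natCast, Nat.floor_natCast] at this
      linarith
    · have := Real.log_nonpos (by positivity) h1.le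
      have := sum_nonneg fun r (_ : r ∈ Ioc 0 (M / s)) ↦ totientWeight_nonneg r
      linarith
  have hlog : Real.log 2 ≤ Real.log s := Real.log_le_log two_pos (mod_cast hs2)
  have hconst : 2 * K ≤ 2 * K / Real.log 2 * Real.log s := by
    rw [div_mul_eq_mul_div, le_div_iff₀ (Real.log_pos one_lt_two)]
    gcongr
  rw [Nat.floor_natCast] at hupper
  linarith

/-! ### Divisor sums of the weight -/

lemma sum_divisors_mul_of_coprime {m n : ℕ} (hmn : m.Coprime n) (F : ℕ → ℝ) :
    ∑ d ∈ (m * n).divisors, F d = ∑ d ∈ m.divisors, ∑ e ∈ n.divisors, F (d * e) := by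
  rw [Nat.divisors_mul, mul_def, sum_image, sum_product]
  exact fun x hx y hy ↦ hmn.mul_injOn_divisors hx hy

lemma sum_divisors_prime_pow_totientWeight_mul {p k : ℕ} (hp : p.Prime) (hk : 0 < k)
    (w : ℕ → ℝ) :
    ∑ s ∈ (p ^ k).divisors, totientWeight s * w s = w 1 + w p / ((p : ℝ) - 1) := by
  obtain ⟨j, rfl⟩ := Nat.exists_eq_add_of_lt hk
  rw [zero_add, Nat.sum_divisors_prime_pow hp, sum_range_succ', sum_range_succ', sum_eq_zero]
  · rw [zero_add, zero_add, pow_one, pow_zero, isMultiplicative_totientWeight.map_one,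
      totientWeight_apply_prime hp]
    ring
  · intro i _
    rw [totientWeight_apply_prime_pow hp (by lia), zero_mul]

lemma prime_pow_div_totient {p k : ℕ} (hp : p.Prime) (hk : 0 < k) :
    ((p ^ k : ℕ) : ℝ) / φ (p ^ k) = 1 + 1 / ((p : ℝ) - 1) := by
  have hp1 : (p : ℝ) - 1 ≠ 0 := sub_ne_zero.mpr (mod_cast hp.ne_one)
  have hp0 : (p : ℝ) ≠ 0 := mod_cast hp.ne_zero
  obtain ⟨j, rfl⟩ := Nat.exists_eq_add_of_lt hk
  rw [zero_add, Nat.totient_prime_pow_succ hp]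
  push_cast [hp.one_le]
  field

theorem sum_divisors_totientWeight (q : ℕ) : ∑ s ∈ q.divisors, totientWeight s = q / φ q := by
  induction q using Nat.recOnPosPrimePosCoprime with
  | zero => simp
  | one => simp [isMultiplicative_totientWeight.map_one]
  | prime_pow p k hp hk =>
    simpa only [mul_one, prime_pow_div_totient hp hk] using
      sum_divisors_prime_pow_totientWeight_mul hp hk fun _ ↦ 1
  | coprime m n _ _ hmn ihm ihn =>
    have hterm : ∀ d ∈ m.divisors, ∀ e ∈ n.divisors,
        totientWeight (d * e) = totientWeight d * totientWeight e := fun d hd e he ↦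
      isMultiplicative_totientWeight.map_mul_of_coprime
        (hmn.of_dvd (Nat.dvd_of_mem_divisors hd) (Nat.dvd_of_mem_divisors he))
    rw [sum_divisors_mul_of_coprime hmn, sum_congr rfl fun d hd ↦ sum_congr rfl (hterm d hd),
      ← sum_mul_sum, ihm, ihn, Nat.totient_mul hmn, Nat.cast_mul, Nat.cast_mul, div_mul_div_comm]

lemma vGY_mul_of_coprime {m n : ℕ} (hmn : m.Coprime n) : vGY (m * n) = vGY m + vGY n := by
  rw [vGY, vGY, vGY, hmn.primeFactors_mul, sum_union hmn.disjoint_primeFactors]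

theorem sum_divisors_totientWeight_mul_log (q : ℕ) :
    ∑ s ∈ q.divisors, totientWeight s * Real.log s = q / φ q * vGY q := by
  induction q using Nat.recOnPosPrimePosCoprime with
  | zero => simp
  | one => simp [vGY]
  | prime_pow p k hp hk =>
    have hp1 : (p : ℝ) - 1 ≠ 0 := sub_ne_zero.mpr (mod_cast hp.ne_one)
    have hp0 : (p : ℝ) ≠ 0 := mod_cast hp.ne_zero
    rw [sum_divisors_prime_pow_totientWeight_mul hp hk (fun s ↦ Real.log s),
      prime_pow_div_totient hp hk, vGY, Nat.primeFactors_prime_pow hk.ne' hp, sum_singleton,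
      Nat.cast_one, Real.log_one]
    field
  | coprime m n _ _ hmn ihm ihn =>
    have hterm : ∀ d ∈ m.divisors, ∀ e ∈ n.divisors,
        totientWeight (d * e) * Real.log (d * e : ℕ) =
          totientWeight d * Real.log d * totientWeight e +
            totientWeight d * (totientWeight e * Real.log e) := by
      intro d hd e he
      have hd0 : (d : ℝ) ≠ 0 := mod_cast (Nat.pos_of_mem_divisors hd).ne'
      have he0 : (e : ℝ) ≠ 0 := mod_cast (Nat.pos_of_mem_divisors he).ne'
      rw [isMultiplicative_totientWeight.map_mul_of_coprime
        (hmn.of_dvd (Nat.dvd_of_mem_divisors hd) (Nat.dvd_of_mem_divisors he)), Nat.cast_mul,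
        Real.log_mul hd0 he0]
      ring
    rw [sum_divisors_mul_of_coprime hmn, sum_congr rfl fun d hd ↦ sum_congr rfl (hterm d hd)]
    simp only [sum_add_distrib]
    rw [← sum_mul_sum, ← sum_mul_sum, ihm, ihn, sum_divisors_totientWeight,
      sum_divisors_totientWeight, vGY_mul_of_coprime hmn, Nat.totient_mul hmn, Nat.cast_mul,
      Nat.cast_mul, ← div_mul_div_comm]
    ring

lemma totientWeight_mul_of_squarefree {d e : ℕ} (hde : Squarefree (d * e)) :
    totientWeight (d * e) = totientWeight d * totientWeight e :=
  isMultiplicative_totientWeight.map_mul_of_coprime (Nat.coprime_of_squarefree_mul hde)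

lemma totientWeight_mul_sigma_le (r : ℕ) :
    totientWeight r * σ 1 r ≤ (totientWeight * (totientWeight * (ζ : ArithmeticFunction ℝ))) r := by
  by_cases hr : Squarefree r
  · have hterm : ∀ x ∈ r.divisorsAntidiagonal, totientWeight x.1 *
        (totientWeight * (ζ : ArithmeticFunction ℝ)) x.2 = totientWeight r * x.2 := by
      intro x hx
      obtain ⟨hxr, -⟩ := Nat.mem_divisorsAntidiagonal.mp hx
      subst hxr
      rw [coe_mul_zeta_apply, sum_divisors_totientWeight, totientWeight_mul_of_squarefree hr,
        totientWeight_of_squarefree hr.of_mul_right]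
      ring
    rw [mul_apply, sum_congr rfl hterm, ← mul_sum,
      Nat.sum_divisorsAntidiagonal' (fun _ e ↦ (e : ℝ)), sigma_one_apply, Nat.cast_sum]
  · rw [totientWeight_eq_zero hr, zero_mul, mul_apply]
    refine sum_nonneg fun x _ ↦ mul_nonneg (totientWeight_nonneg _) ?_
    rw [coe_mul_zeta_apply]
    exact sum_nonneg fun j _ ↦ totientWeight_nonneg j

lemma sum_Ioc_dirichlet_mul_le {w g : ArithmeticFunction ℝ} {K : ℝ} (hw : ∀ n, 0 ≤ w n)
    (hsum : Summable fun n : ℕ ↦ w n / n) (hK : 0 ≤ K)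
    (hg : ∀ m : ℕ, ∑ n ∈ Ioc 0 m, g n ≤ K * m) (m : ℕ) :
    ∑ n ∈ Ioc 0 m, (w * g) n ≤ K * (∑' n : ℕ, w n / n) * m := calc
  ∑ n ∈ Ioc 0 m, (w * g) n = ∑ d ∈ Ioc 0 m, w d * ∑ n ∈ Ioc 0 (m / d), g n :=
    sum_Ioc_mul_eq_sum_sum w g m
  _ ≤ ∑ d ∈ Ioc 0 m, w d * (K * (m / d)) := by
    refine sum_le_sum fun d _ ↦ mul_le_mul_of_nonneg_left ((hg _).trans ?_) (hw d)
    exact mul_le_mul_of_nonneg_left Nat.cast_div_le hK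
  _ = K * (∑ d ∈ Ioc 0 m, w d / d) * m := by
    rw [mul_sum, sum_mul]
    exact sum_congr rfl fun d _ ↦ by ring
  _ ≤ K * (∑' n : ℕ, w n / n) * m := by
    gcongr
    exact hsum.sum_le_tsum _ fun d _ ↦ div_nonneg (hw d) d.cast_nonneg

theorem exists_sum_totientWeight_mul_sigma_le :
    ∃ C : ℝ, 0 < C ∧ ∀ M : ℕ, ∑ r ∈ Ioc 0 M, totientWeight r * σ 1 r ≤ C * M := by
  have hS := summable_totientWeight_div
  set S := ∑' n : ℕ, totientWeight n / n
  have hS0 : 0 ≤ S := tsum_nonneg fun n ↦ div_nonneg (totientWeight_nonneg n) n.cast_nonneg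
  have hζ (m : ℕ) : ∑ n ∈ Ioc 0 m, (ζ : ArithmeticFunction ℝ) n ≤ 1 * m := by
    rw [one_mul, sum_congr rfl fun n hn ↦ natCoe_apply.trans
      (congrArg _ (zeta_apply_ne (mem_Ioc.mp hn).1.ne'))]
    simp
  refine ⟨S * S + 1, by positivity, fun M ↦ ?_⟩
  calc ∑ r ∈ Ioc 0 M, totientWeight r * σ 1 r
      ≤ ∑ r ∈ Ioc 0 M, (totientWeight * (totientWeight * (ζ : ArithmeticFunction ℝ))) r :=
        sum_le_sum fun r _ ↦ totientWeight_mul_sigma_le r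
    _ ≤ 1 * S * S * M :=
        sum_Ioc_dirichlet_mul_le totientWeight_nonneg hS (by positivity)
          (sum_Ioc_dirichlet_mul_le totientWeight_nonneg hS zero_le_one hζ) M
    _ ≤ (S * S + 1) * M := by gcongr; linarith

/-! ### Near-orthogonality along a progression -/

/-- The inner sum of `lamR`: for squarefree `r` it is `μ(r)` times the Ramanujan sum `c_r(n)`. -/
noncomputable def gcdMoebiusSum (r n : ℕ) : ℝ := ∑ d ∈ (Nat.gcd r n).divisors, (d : ℝ) * μ d

lemma gcdMoebiusSum_eq_sum_ite {r : ℕ} (hr : r ≠ 0) (n : ℕ) :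
    gcdMoebiusSum r n = ∑ d ∈ r.divisors, if d ∣ n then (d : ℝ) * μ d else 0 := by
  rw [gcdMoebiusSum, ← sum_filter]
  congr 1
  ext d
  simp only [Nat.mem_divisors, mem_filter, Nat.dvd_gcd_iff, ne_eq, Nat.gcd_eq_zero_iff]
  tauto

lemma sum_moebius_filter_dvd {k : ℕ} (hk : Squarefree k) (j : ℕ) :
    ∑ d ∈ k.divisors with j ∣ d, (μ d : ℝ) = if j = k then (μ k : ℝ) else 0 := by
  have hinv := (sum_eq_iff_sum_mul_moebius_eq (R := ℝ) (f := fun i ↦ if j = i then 1 else 0)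
    (g := fun n ↦ if j ∣ n then 1 else 0)).mp
    (fun n hn ↦ by simp [hn.ne']) k (Nat.pos_of_ne_zero hk.ne_zero)
  have hμ : ∀ x ∈ k.divisorsAntidiagonal, (μ x.2 : ℝ) = μ k * μ x.1 := by
    intro x hx
    obtain ⟨rfl, -⟩ := Nat.mem_divisorsAntidiagonal.mp hx
    have hsq : (μ x.1 : ℝ) ^ 2 = 1 := mod_cast moebius_sq_eq_one_of_squarefree hk.of_mul_left
    rw [isMultiplicative_moebius.map_mul_of_coprime (Nat.coprime_of_squarefree_mul hk)]
    push_cast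
    linear_combination -(μ x.2 : ℝ) * hsq
  calc ∑ d ∈ k.divisors with j ∣ d, (μ d : ℝ)
      = ∑ x ∈ k.divisorsAntidiagonal, if j ∣ x.2 then (μ x.2 : ℝ) else 0 := by
        rw [sum_filter, Nat.sum_divisorsAntidiagonal' (fun _ d ↦ if j ∣ d then (μ d : ℝ) else 0)]
    _ = μ k * ∑ x ∈ k.divisorsAntidiagonal, μ x.1 * if j ∣ x.2 then (1 : ℝ) else 0 := by
        rw [mul_sum]
        refine sum_congr rfl fun x hx ↦ ?_
        rw [hμ x hx]
        split_ifs <;> ring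
    _ = if j = k then (μ k : ℝ) else 0 := by rw [hinv, mul_ite, mul_one, mul_zero]

lemma cast_gcd_eq_sum_totient {k d : ℕ} (hd : d ∈ k.divisors) (e : ℕ) :
    (Nat.gcd d e : ℝ) =
      ∑ j ∈ k.divisors, (φ j : ℝ) * ((if j ∣ d then 1 else 0) * if j ∣ e then 1 else 0) := by
  obtain ⟨hdk, hk⟩ := Nat.mem_divisors.mp hd
  have hd0 := ne_zero_of_dvd_ne_zero hk hdk
  have hdivisors : (Nat.gcd d e).divisors = {j ∈ k.divisors | j ∣ d ∧ j ∣ e} := by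
    ext j
    simp only [Nat.mem_divisors, mem_filter, Nat.dvd_gcd_iff, ne_eq, Nat.gcd_eq_zero_iff]
    exact ⟨fun h ↦ ⟨⟨h.1.1.trans hdk, hk⟩, h.1⟩, fun h ↦ ⟨h.2, fun h0 ↦ hd0 h0.1⟩⟩
  rw [← Nat.sum_totient (Nat.gcd d e), Nat.cast_sum, hdivisors, sum_filter]
  refine sum_congr rfl fun j _ ↦ ?_
  by_cases h1 : j ∣ d <;> by_cases h2 : j ∣ e <;> simp [h1, h2]

theorem sum_sum_moebius_mul_gcd {k l : ℕ} (hk : Squarefree k) (hl : Squarefree l) :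
    ∑ d ∈ k.divisors, ∑ e ∈ l.divisors, (μ d : ℝ) * μ e * Nat.gcd d e =
      if k = l then (φ k : ℝ) else 0 := by
  calc ∑ d ∈ k.divisors, ∑ e ∈ l.divisors, (μ d : ℝ) * μ e * Nat.gcd d e
      = ∑ d ∈ k.divisors, ∑ e ∈ l.divisors, ∑ j ∈ k.divisors,
          φ j * ((if j ∣ d then (μ d : ℝ) else 0) * if j ∣ e then (μ e : ℝ) else 0) := by
        refine sum_congr rfl fun d hd ↦ sum_congr rfl fun e _ ↦ ?_
        rw [cast_gcd_eq_sum_totient hd, mul_sum]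
        refine sum_congr rfl fun j _ ↦ ?_
        split_ifs <;> ring
    _ = ∑ j ∈ k.divisors, φ j *
          ((∑ d ∈ k.divisors with j ∣ d, (μ d : ℝ)) * ∑ e ∈ l.divisors with j ∣ e, (μ e : ℝ)) := by
        rw [sum_congr rfl fun d _ ↦ sum_comm, sum_comm]
        refine sum_congr rfl fun j _ ↦ ?_
        rw [sum_filter, sum_filter, sum_mul_sum, mul_sum]
        exact sum_congr rfl fun d _ ↦ (mul_sum ..).symm
    _ = φ k * (μ k * if k = l then (μ l : ℝ) else 0) := by
        rw [sum_eq_single_of_mem k (Nat.mem_divisors_self k hk.ne_zero)]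
        · rw [sum_moebius_filter_dvd hk, sum_moebius_filter_dvd hl, if_pos rfl]
        · intro j _ hj
          rw [sum_moebius_filter_dvd hk, if_neg hj, zero_mul, mul_zero]
    _ = if k = l then (φ k : ℝ) else 0 := by
        split_ifs with hkl
        · subst hkl
          have hsq : (μ k : ℝ) ^ 2 = 1 := mod_cast moebius_sq_eq_one_of_squarefree hk
          linear_combination (φ k : ℝ) * hsq
        · ring

/-- The positive integers `n ≤ N` with `n ≡ a (mod q)`. -/
def progression (N q a : ℕ) : Finset ℕ := {n ∈ Ioc 0 N | n ≡ a [MOD q]}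

lemma filter_Icc_one_natCast_eq (N q a : ℕ) :
    (Icc 1 N).filter (fun n : ℕ ↦ (n : ZMod q) = (a : ZMod q)) = progression N q a := by
  rw [progression, ← Icc_add_one_left_eq_Ioc]
  exact filter_congr fun n _ ↦ ZMod.natCast_eq_natCast_iff n a q

lemma coprime_of_mem_progression {N q a n : ℕ} (ha : Nat.gcd a q = 1)
    (hn : n ∈ progression N q a) : Nat.Coprime n q :=
  (mem_filter.mp hn).2.gcd_eq.trans ha

lemma abs_card_progression_sub_le (N a : ℕ) {q : ℕ} (hq : 0 < q) :
    |(#(progression N q a) : ℝ) - N / q| ≤ 1 := by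
  have hcard := Nat.Ioc_filter_modEq_card 0 N hq a
  set A := ((N : ℚ) - a) / q with hA
  set B := (((0 : ℕ) : ℚ) - a) / q with hB
  have hAB : B ≤ A := by rw [hA, hB]; gcongr; exact N.zero_le
  rw [max_eq_left (sub_nonneg.mpr (Int.floor_le_floor hAB))] at hcard
  have hcard' : (#(progression N q a) : ℚ) = ⌊A⌋ - ⌊B⌋ := mod_cast hcard
  have hsub : A - B = N / q := by rw [hA, hB]; push_cast; ring
  have hQ : |(#(progression N q a) : ℚ) - N / q| ≤ 1 := by
    rw [hcard', ← hsub, abs_le]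
    constructor <;>
      linarith [Int.floor_le A, Int.lt_floor_add_one A, Int.floor_le B, Int.lt_floor_add_one B]
  simpa using (Rat.cast_le (K := ℝ)).mpr hQ

lemma abs_card_progression_filter_dvd_sub_le (N a : ℕ) {q m : ℕ} (hq : 0 < q) (hm : 0 < m)
    (hqm : Nat.Coprime q m) :
    |(#{n ∈ progression N q a | m ∣ n} : ℝ) - N / (q * m)| ≤ 1 := by
  obtain ⟨v, hva, hv0⟩ := Nat.chineseRemainder hqm a 0
  have hfilter : {n ∈ progression N q a | m ∣ n} = progression N (q * m) v := by
    rw [progression, filter_filter]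
    refine filter_congr fun n _ ↦ ?_
    rw [← Nat.modEq_and_modEq_iff_modEq_mul hqm, ← Nat.modEq_zero_iff_dvd]
    exact ⟨fun h ↦ ⟨h.1.trans hva.symm, h.2.trans hv0.symm⟩,
      fun h ↦ ⟨h.1.trans hva, h.2.trans hv0⟩⟩
  rw [hfilter, ← Nat.cast_mul]
  exact abs_card_progression_sub_le N v (by positivity)

lemma abs_sum_progression_dvd_dvd_sub_le (N a : ℕ) {q d e : ℕ} (hq : 0 < q) (hd : 0 < d)
    (he : 0 < e) (hqd : Nat.Coprime q d) (hqe : Nat.Coprime q e) :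
    |∑ n ∈ progression N q a,
        (if d ∣ n then (d : ℝ) * μ d else 0) * (if e ∣ n then (e : ℝ) * μ e else 0) -
      N / q * (μ d * μ e * Nat.gcd d e)| ≤ d * e := by
  have hlcm0 : 0 < Nat.lcm d e := Nat.lcm_pos hd he
  have hqlcm : Nat.Coprime q (Nat.lcm d e) := (hqd.mul_right hqe).coprime_dvd_right
    (Nat.lcm_dvd_mul d e)
  have hcount : ∑ n ∈ progression N q a,
      (if d ∣ n then (d : ℝ) * μ d else 0) * (if e ∣ n then (e : ℝ) * μ e else 0) =
      #{n ∈ progression N q a | Nat.lcm d e ∣ n} *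
        (d * μ d * (e * μ e)) := by
    rw [card_filter, Nat.cast_sum, sum_mul]
    refine sum_congr rfl fun n _ ↦ ?_
    by_cases h1 : d ∣ n <;> by_cases h2 : e ∣ n <;> simp [h1, h2, Nat.lcm_dvd_iff]
  have hgl : (Nat.gcd d e : ℝ) * Nat.lcm d e = d * e := mod_cast Nat.gcd_mul_lcm d e
  have hmain : (N : ℝ) / q * (μ d * μ e * Nat.gcd d e) =
      N / (q * Nat.lcm d e) * (d * μ d * (e * μ e)) := by
    rw [show (d : ℝ) * μ d * (e * μ e) = μ d * μ e * (Nat.gcd d e * Nat.lcm d e) by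
      rw [hgl]; ring]
    field
  have hμ (i : ℕ) : |(μ i : ℝ)| ≤ 1 := mod_cast abs_moebius_le_one (n := i)
  rw [hcount, hmain, ← sub_mul, abs_mul, abs_mul, abs_mul, abs_mul, Nat.abs_cast, Nat.abs_cast]
  calc _ ≤ 1 * ((d : ℝ) * 1 * (e * 1)) := by
        gcongr
        exacts [abs_card_progression_filter_dvd_sub_le N a hq hlcm0 hqlcm, hμ d, hμ e]
    _ = d * e := by ring

theorem abs_sum_gcdMoebiusSum_mul_sub_le (N a : ℕ) {q k l : ℕ} (hq : 0 < q) (hk : Squarefree k)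
    (hl : Squarefree l) (hkq : Nat.Coprime k q) (hlq : Nat.Coprime l q) :
    |∑ n ∈ progression N q a, gcdMoebiusSum k n * gcdMoebiusSum l n -
      N / q * (if k = l then (φ k : ℝ) else 0)| ≤ σ 1 k * σ 1 l := by
  have hexpand : ∑ n ∈ progression N q a,
      gcdMoebiusSum k n * gcdMoebiusSum l n = ∑ d ∈ k.divisors, ∑ e ∈ l.divisors,
        ∑ n ∈ progression N q a,
          (if d ∣ n then (d : ℝ) * μ d else 0) * (if e ∣ n then (e : ℝ) * μ e else 0) := by
    rw [sum_congr rfl fun d _ ↦ sum_comm, sum_comm]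
    refine sum_congr rfl fun n _ ↦ ?_
    rw [gcdMoebiusSum_eq_sum_ite hk.ne_zero, gcdMoebiusSum_eq_sum_ite hl.ne_zero, sum_mul_sum]
  rw [hexpand, ← sum_sum_moebius_mul_gcd hk hl, mul_sum, ← sum_sub_distrib, sigma_one_apply,
    sigma_one_apply, Nat.cast_sum, Nat.cast_sum, sum_mul_sum]
  refine (abs_sum_le_sum_abs _ _).trans (sum_le_sum fun d hd ↦ ?_)
  rw [mul_sum, ← sum_sub_distrib]
  refine (abs_sum_le_sum_abs _ _).trans (sum_le_sum fun e he ↦ ?_)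
  exact abs_sum_progression_dvd_dvd_sub_le N a hq (Nat.pos_of_mem_divisors hd)
    (Nat.pos_of_mem_divisors he) (hkq.coprime_dvd_left (Nat.dvd_of_mem_divisors hd)).symm
    (hlq.coprime_dvd_left (Nat.dvd_of_mem_divisors he)).symm

/-! ### Grouping by the part coprime to the modulus -/

-- The bijection is `r = (r / gcd(r, q)) * gcd(r, q)`, whose factors are coprime for squarefree `r`.
theorem sum_Ioc_eq_sum_coprime_sum_divisors {A : Type*} [AddCommMonoid A] {q : ℕ} (hq : 0 < q)
    (M : ℕ) {f : ℕ → A} (hf : ∀ r, ¬Squarefree r → f r = 0) :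
    ∑ r ∈ Ioc 0 M, f r =
      ∑ k ∈ Ioc 0 M with Nat.Coprime k q, ∑ s ∈ q.divisors with k * s ≤ M, f (k * s) := by
  have hmem {x : (_ : ℕ) × ℕ} : x ∈ {k ∈ Ioc 0 M | Nat.Coprime k q}.sigma
      (fun k ↦ {s ∈ q.divisors | k * s ≤ M}) ↔
        (0 < x.1 ∧ x.1 ≤ M) ∧ Nat.Coprime x.1 q ∧ x.2 ∣ q ∧ x.1 * x.2 ≤ M := by
    simp only [mem_sigma, mem_filter, mem_Ioc, Nat.mem_divisors]
    have := hq.ne'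
    tauto
  have hgcd {k s : ℕ} (hk : Nat.Coprime k q) (hs : s ∣ q) : Nat.gcd (k * s) q = s := by
    rw [hk.gcd_mul_left_cancel, Nat.gcd_eq_left hs]
  rw [sum_sigma']
  refine (sum_bij_ne_zero (fun x _ _ ↦ x.1 * x.2) ?_ ?_ ?_ fun _ _ _ ↦ rfl).symm
  · intro x hx _
    obtain ⟨⟨hk0, -⟩, -, hs, hle⟩ := hmem.mp hx
    exact mem_Ioc.mpr ⟨Nat.mul_pos hk0 (Nat.pos_of_dvd_of_pos hs hq), hle⟩
  · rintro ⟨k, s⟩ hx _ ⟨k', s'⟩ hx' _ heq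
    obtain ⟨-, hk, hs, -⟩ := hmem.mp hx
    obtain ⟨-, hk', hs', -⟩ := hmem.mp hx'
    dsimp only at hk hs hk' hs' heq
    obtain rfl : s = s' := by rw [← hgcd hk hs, ← hgcd hk' hs', heq]
    obtain rfl := Nat.eq_of_mul_eq_mul_right (Nat.pos_of_dvd_of_pos hs hq) heq
    rfl
  · intro r hr hfr
    obtain ⟨hr0, hrM⟩ := mem_Ioc.mp hr
    have hmul : r / Nat.gcd r q * Nat.gcd r q = r := Nat.div_mul_cancel (Nat.gcd_dvd_left r q)
    refine ⟨⟨r / Nat.gcd r q, Nat.gcd r q⟩, hmem.mpr ⟨⟨?_, ?_⟩, ?_, ?_, ?_⟩, ?_, hmul⟩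
    · exact Nat.div_pos (Nat.gcd_le_left q hr0) (Nat.gcd_pos_of_pos_left q hr0)
    · exact (Nat.div_le_self _ _).trans hrM
    · exact Nat.coprime_div_gcd_of_squarefree (not_imp_comm.mp (hf r) hfr) hq.ne'
    · exact Nat.gcd_dvd_right r q
    · exact hmul.trans_le hrM
    · rwa [hmul]

/-- The total weight of the divisors `s` of `q` with `k * s ≤ M`: the factor by which the weight of
`k` grows when the integers `r ≤ M` are grouped by their part `k` coprime to `q`. -/
noncomputable def truncatedWeightSum (M q k : ℕ) : ℝ :=
  ∑ s ∈ q.divisors with k * s ≤ M, totientWeight s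

lemma truncatedWeightSum_nonneg (M q k : ℕ) : 0 ≤ truncatedWeightSum M q k :=
  sum_nonneg fun s _ ↦ totientWeight_nonneg s

lemma sum_Ioc_totientWeight_mul {q : ℕ} (hq : 0 < q) (M : ℕ) (g : ℕ → ℝ) :
    ∑ r ∈ Ioc 0 M, totientWeight r * g r = ∑ k ∈ Ioc 0 M with Nat.Coprime k q,
      totientWeight k * ∑ s ∈ q.divisors with k * s ≤ M, totientWeight s * g (k * s) := by
  rw [sum_Ioc_eq_sum_coprime_sum_divisors hq M
    fun r hr ↦ by rw [totientWeight_eq_zero hr, zero_mul]]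
  refine sum_congr rfl fun k hk ↦ ?_
  rw [mul_sum]
  refine sum_congr rfl fun s hs ↦ ?_
  have hks : Nat.Coprime k s := (mem_filter.mp hk).2.coprime_dvd_right
    (Nat.dvd_of_mem_divisors (mem_filter.mp hs).1)
  rw [isMultiplicative_totientWeight.map_mul_of_coprime hks, mul_assoc]

lemma sum_Ioc_totientWeight_mul_of_invariant {q : ℕ} (hq : 0 < q) (M : ℕ) {g : ℕ → ℝ}
    (hg : ∀ k s, s ∣ q → g (k * s) = g k) :
    ∑ r ∈ Ioc 0 M, totientWeight r * g r = ∑ k ∈ Ioc 0 M with Nat.Coprime k q,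
      totientWeight k * truncatedWeightSum M q k * g k := by
  rw [sum_Ioc_totientWeight_mul hq]
  refine sum_congr rfl fun k _ ↦ ?_
  rw [truncatedWeightSum, mul_assoc, sum_mul]
  congr 1
  exact sum_congr rfl fun s hs ↦ by rw [hg k s (Nat.dvd_of_mem_divisors (mem_filter.mp hs).1)]

lemma lamR_eq_sum_coprime {q n : ℕ} (hq : 0 < q) (hn : Nat.Coprime n q) (R : ℝ) :
    lamR R n = ∑ k ∈ Ioc 0 ⌊R⌋₊ with Nat.Coprime k q,
      totientWeight k * truncatedWeightSum ⌊R⌋₊ q k * gcdMoebiusSum k n := by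
  rw [← sum_Ioc_totientWeight_mul_of_invariant hq (g := (gcdMoebiusSum · n)), lamR,
    ← Icc_add_one_left_eq_Ioc]
  · rfl
  · intro k s hs
    rw [gcdMoebiusSum, (hn.coprime_dvd_right hs).symm.gcd_mul_right_cancel, gcdMoebiusSum]

lemma sum_coprime_totientWeight_mul_sigma_le {q : ℕ} (hq : 0 < q) (M : ℕ) :
    ∑ k ∈ Ioc 0 M with Nat.Coprime k q, totientWeight k * truncatedWeightSum M q k * σ 1 k ≤
      ∑ r ∈ Ioc 0 M, totientWeight r * σ 1 r := by
  rw [sum_Ioc_totientWeight_mul hq M (fun r ↦ (σ 1 r : ℝ))]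
  refine sum_le_sum fun k hk ↦ ?_
  rw [truncatedWeightSum, mul_assoc, sum_mul]
  refine mul_le_mul_of_nonneg_left (sum_le_sum fun s hs ↦ ?_) (totientWeight_nonneg k)
  refine mul_le_mul_of_nonneg_left ?_ (totientWeight_nonneg s)
  have hk0 : k ≠ 0 := (mem_Ioc.mp (mem_filter.mp hk).1).1.ne'
  have hs0 : s ≠ 0 := (Nat.pos_of_mem_divisors (mem_filter.mp hs).1).ne'
  rw [sigma_one_apply, sigma_one_apply, Nat.cast_le]
  exact sum_le_sum_of_subset (Nat.divisors_subset_of_dvd (mul_ne_zero hk0 hs0) (k.dvd_mul_right s))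

theorem abs_sum_sq_gcdMoebiusSum_sub_le (N a : ℕ) {q : ℕ} (hq : 0 < q) {D : Finset ℕ}
    (hD : ∀ k ∈ D, Nat.Coprime k q) {c : ℕ → ℝ} (hc : ∀ k, 0 ≤ c k)
    (hsq : ∀ k, ¬Squarefree k → c k = 0) :
    |∑ n ∈ progression N q a, (∑ k ∈ D, c k * gcdMoebiusSum k n) ^ 2 -
      N / q * ∑ k ∈ D, c k ^ 2 * φ k| ≤ (∑ k ∈ D, c k * σ 1 k) ^ 2 := by
  have hexpand : ∑ n ∈ progression N q a, (∑ k ∈ D, c k * gcdMoebiusSum k n) ^ 2 =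
      ∑ k ∈ D, ∑ l ∈ D, c k * c l *
        ∑ n ∈ progression N q a, gcdMoebiusSum k n * gcdMoebiusSum l n := by
    simp_rw [mul_sum]
    rw [sum_congr rfl fun k _ ↦ sum_comm, sum_comm]
    refine sum_congr rfl fun n _ ↦ ?_
    rw [sq, sum_mul_sum]
    exact sum_congr rfl fun k _ ↦ sum_congr rfl fun l _ ↦ by ring
  have hdiag : N / q * ∑ k ∈ D, c k ^ 2 * φ k =
      ∑ k ∈ D, ∑ l ∈ D, c k * c l * (N / q * if k = l then (φ k : ℝ) else 0) := by
    rw [mul_sum]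
    refine sum_congr rfl fun k hk ↦ ?_
    simp only [mul_ite, mul_zero, sum_ite_eq, hk, if_true]
    ring
  rw [hexpand, hdiag, ← sum_sub_distrib, sq, sum_mul_sum]
  refine (abs_sum_le_sum_abs _ _).trans (sum_le_sum fun k hk ↦ ?_)
  rw [← sum_sub_distrib]
  refine (abs_sum_le_sum_abs _ _).trans (sum_le_sum fun l hl ↦ ?_)
  by_cases hk2 : Squarefree k
  · by_cases hl2 : Squarefree l
    · rw [← mul_sub, abs_mul, abs_of_nonneg (mul_nonneg (hc k) (hc l)), mul_mul_mul_comm]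
      exact mul_le_mul_of_nonneg_left (abs_sum_gcdMoebiusSum_mul_sub_le N a hq hk2 hl2
        (hD k hk) (hD l hl)) (mul_nonneg (hc k) (hc l))
    · simp [hsq l hl2]
  · simp [hsq k hk2]

lemma totientWeight_sq_mul_totient (k : ℕ) : totientWeight k ^ 2 * φ k = totientWeight k := by
  by_cases hk : Squarefree k
  · have hφ : (φ k : ℝ) ≠ 0 := mod_cast (Nat.totient_pos.mpr hk.ne_zero.bot_lt).ne'
    rw [totientWeight_of_squarefree hk]
    field
  · rw [totientWeight_eq_zero hk]
    ring

theorem exists_abs_sum_lamR_sq_sub_le :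
    ∃ C : ℝ, 0 < C ∧ ∀ (N q a : ℕ) (R : ℝ), 0 < q → Nat.gcd a q = 1 → 0 ≤ R →
      |∑ n ∈ progression N q a, lamR R n ^ 2 - N / q * ∑ k ∈ Ioc 0 ⌊R⌋₊ with Nat.Coprime k q,
        totientWeight k * truncatedWeightSum ⌊R⌋₊ q k ^ 2| ≤ C * R ^ 2 := by
  obtain ⟨C, hC0, hC⟩ := exists_sum_totientWeight_mul_sigma_le
  refine ⟨C ^ 2, by positivity, fun N q a R hq ha hR ↦ ?_⟩
  set D := {k ∈ Ioc 0 ⌊R⌋₊ | Nat.Coprime k q}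
  set c : ℕ → ℝ := fun k ↦ totientWeight k * truncatedWeightSum ⌊R⌋₊ q k
  have hc (k : ℕ) : 0 ≤ c k := mul_nonneg (totientWeight_nonneg k) (truncatedWeightSum_nonneg _ q k)
  have hsq (k : ℕ) (hk : ¬Squarefree k) : c k = 0 := by
    simp only [c, totientWeight_eq_zero hk, zero_mul]
  have hdiag : ∑ k ∈ D, totientWeight k * truncatedWeightSum ⌊R⌋₊ q k ^ 2 =
      ∑ k ∈ D, c k ^ 2 * φ k := by
    refine sum_congr rfl fun k _ ↦ ?_
    rw [mul_pow, mul_right_comm, totientWeight_sq_mul_totient]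
  have hlamR : ∑ n ∈ progression N q a, lamR R n ^ 2 =
      ∑ n ∈ progression N q a, (∑ k ∈ D, c k * gcdMoebiusSum k n) ^ 2 :=
    sum_congr rfl fun n hn ↦ by rw [lamR_eq_sum_coprime hq (coprime_of_mem_progression ha hn)]
  have hsigma : ∑ k ∈ D, c k * σ 1 k ≤ C * R := calc
    _ ≤ ∑ r ∈ Ioc 0 ⌊R⌋₊, totientWeight r * σ 1 r := sum_coprime_totientWeight_mul_sigma_le hq _
    _ ≤ C * ⌊R⌋₊ := hC _
    _ ≤ C * R := by gcongr; exact Nat.floor_le hR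
  rw [hdiag, hlamR, ← mul_pow]
  refine (abs_sum_sq_gcdMoebiusSum_sub_le N a hq (fun k hk ↦ (mem_filter.mp hk).2) hc hsq).trans ?_
  exact pow_le_pow_left₀ (sum_nonneg fun k _ ↦ mul_nonneg (hc k) (Nat.cast_nonneg _)) hsigma 2

lemma sum_coprime_tail_le {q : ℕ} (hq : 0 < q) (M s : ℕ) :
    ∑ k ∈ Ioc 0 M with Nat.Coprime k q,
        (if M < k * s then totientWeight k * truncatedWeightSum M q k else 0) ≤
      ∑ r ∈ Ioc 0 M with M < r * s, totientWeight r := by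
  have hsplit := sum_Ioc_totientWeight_mul hq M (fun r ↦ if M < r * s then 1 else 0)
  simp only [mul_ite, mul_one, mul_zero] at hsplit
  rw [sum_filter _ (fun r ↦ totientWeight r), hsplit]
  refine sum_le_sum fun k _ ↦ ?_
  split_ifs with hks
  · refine mul_le_mul_of_nonneg_left (sum_le_sum fun t ht ↦ ?_) (totientWeight_nonneg k)
    have ht0 : 0 < t := Nat.pos_of_mem_divisors (mem_filter.mp ht).1
    rw [if_pos (hks.trans_le (Nat.mul_le_mul_right s (Nat.le_mul_of_pos_right k ht0)))]
  · refine mul_nonneg (totientWeight_nonneg k) (sum_nonneg fun t _ ↦ ?_)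
    split_ifs
    exacts [totientWeight_nonneg t, le_rfl]

lemma sum_totientWeight_sub_eq {q : ℕ} (hq : 0 < q) (M : ℕ) :
    ∑ r ∈ Ioc 0 M, totientWeight r - φ q / q * ∑ k ∈ Ioc 0 M with Nat.Coprime k q,
        totientWeight k * truncatedWeightSum M q k ^ 2 =
      φ q / q * ∑ s ∈ q.divisors, totientWeight s * ∑ k ∈ Ioc 0 M with Nat.Coprime k q,
        if M < k * s then totientWeight k * truncatedWeightSum M q k else 0 := by
  have hφ : (φ q : ℝ) ≠ 0 := mod_cast (Nat.totient_pos.mpr hq).ne'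
  have hsplit := sum_Ioc_totientWeight_mul_of_invariant hq M (g := 1) fun _ _ _ ↦ rfl
  simp only [Pi.one_apply, mul_one] at hsplit
  have hcompl (k : ℕ) : ∑ s ∈ q.divisors, totientWeight s * (if M < k * s then 1 else 0) =
      q / φ q - truncatedWeightSum M q k := by
    rw [← sum_divisors_totientWeight, truncatedWeightSum, eq_sub_iff_add_eq', sum_filter,
      ← sum_add_distrib]
    refine sum_congr rfl fun s _ ↦ ?_
    rcases le_or_gt (k * s) M with h | h
    · simp [h, h.not_gt]
    · simp [h, h.not_ge]
  have hswap : ∑ s ∈ q.divisors, totientWeight s * ∑ k ∈ Ioc 0 M with Nat.Coprime k q,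
      (if M < k * s then totientWeight k * truncatedWeightSum M q k else 0) =
      ∑ k ∈ Ioc 0 M with Nat.Coprime k q, totientWeight k * truncatedWeightSum M q k *
        (q / φ q - truncatedWeightSum M q k) := by
    simp_rw [← hcompl, mul_sum]
    rw [sum_comm]
    refine sum_congr rfl fun k _ ↦ sum_congr rfl fun s _ ↦ ?_
    split_ifs <;> ring
  rw [hswap, hsplit, mul_sum, mul_sum, ← sum_sub_distrib]
  refine sum_congr rfl fun k _ ↦ ?_
  field

theorem exists_abs_sum_totientWeight_sub_le :
    ∃ C : ℝ, 0 < C ∧ ∀ M q : ℕ, 0 < q →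
      |∑ r ∈ Ioc 0 M, totientWeight r - φ q / q * ∑ k ∈ Ioc 0 M with Nat.Coprime k q,
        totientWeight k * truncatedWeightSum M q k ^ 2| ≤ C * vGY q := by
  obtain ⟨C, hC0, hC⟩ := exists_sum_totientWeight_tail_le
  refine ⟨C, hC0, fun M q hq ↦ ?_⟩
  have hφ : (φ q : ℝ) ≠ 0 := mod_cast (Nat.totient_pos.mpr hq).ne'
  rw [sum_totientWeight_sub_eq hq, abs_of_nonneg]
  · calc _ ≤ φ q / q * ∑ s ∈ q.divisors, totientWeight s * (C * Real.log s) := by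
          gcongr with s hs
          · exact totientWeight_nonneg s
          · exact (sum_coprime_tail_le hq M s).trans (hC M s (Nat.pos_of_mem_divisors hs))
      _ = φ q / q * (C * (q / φ q * vGY q)) := by
          rw [← sum_divisors_totientWeight_mul_log, mul_sum _ _ C]
          congr 1
          exact sum_congr rfl fun s _ ↦ mul_left_comm ..
      _ = C * vGY q := by field
  · refine mul_nonneg (by positivity) (sum_nonneg fun s _ ↦ mul_nonneg (totientWeight_nonneg s)
      (sum_nonneg fun k _ ↦ ?_))
    split_ifs
    exacts [mul_nonneg (totientWeight_nonneg k) (truncatedWeightSum_nonneg M q k), le_rfl]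

theorem exists_abs_sum_lamR_sq_sub_sum_totientWeight_le :
    ∃ C : ℝ, 0 < C ∧ ∀ (N q a : ℕ) (R : ℝ), 0 < q → Nat.gcd a q = 1 → 0 ≤ R →
      |∑ n ∈ progression N q a, lamR R n ^ 2 - N / φ q * ∑ r ∈ Ioc 0 ⌊R⌋₊, totientWeight r| ≤
        C * (N / φ q * vGY q + R ^ 2) := by
  obtain ⟨C₁, hC₁, hsquare⟩ := exists_abs_sum_lamR_sq_sub_le
  obtain ⟨C₂, hC₂, hdiag⟩ := exists_abs_sum_totientWeight_sub_le
  refine ⟨C₁ + C₂, by positivity, fun N q a R hq ha hR ↦ ?_⟩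
  have hv : 0 ≤ vGY q := sum_nonneg fun p _ ↦ by positivity
  have hφ : (φ q : ℝ) ≠ 0 := mod_cast (Nat.totient_pos.mpr hq).ne'
  set Q := ∑ k ∈ Ioc 0 ⌊R⌋₊ with Nat.Coprime k q,
    totientWeight k * truncatedWeightSum ⌊R⌋₊ q k ^ 2
  set H := ∑ r ∈ Ioc 0 ⌊R⌋₊, totientWeight r
  have hQH : |(N : ℝ) / q * Q - N / φ q * H| ≤ N / φ q * (C₂ * vGY q) := by
    rw [show (N : ℝ) / q * Q = N / φ q * (φ q / q * Q) by field, ← mul_sub, abs_mul,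
      abs_of_nonneg (by positivity), abs_sub_comm]
    gcongr
    exact hdiag ⌊R⌋₊ q hq
  calc _ ≤ _ := abs_sub_le _ (N / q * Q) _
    _ ≤ C₁ * R ^ 2 + N / φ q * (C₂ * vGY q) := add_le_add (hsquare N q a R hq ha hR) hQH
    _ ≤ C₁ * R ^ 2 + N / φ q * (C₂ * vGY q) + (C₁ * (N / φ q * vGY q) + C₂ * R ^ 2) :=
        le_add_of_nonneg_right (by positivity)
    _ = _ := by ring

theorem prop3_lamR_squared :
    ∀ ε : ℝ, 0 < ε → ∃ C : ℝ, 0 < C ∧ ∀ (N q a : ℕ) (R : ℝ),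
      1 ≤ N → 1 ≤ q → Nat.gcd a q = 1 → 2 ≤ R →
      |(∑ n ∈ (Finset.Icc 1 N).filter (fun n : ℕ => (n : ZMod q) = (a : ZMod q)),
          (lamR R n) ^ 2)
        - ((N : ℝ) / (q.totient : ℝ)) * (Real.log R + cGY)|
      ≤ C * (((N : ℝ) / (q.totient : ℝ)) * vGY q
          + ((N : ℝ) / (q.totient : ℝ)) * R ^ (-(1 : ℝ) / 2 + ε) + R ^ 2) := by
  intro ε hε
  obtain ⟨C₁, hC₁, hlamR⟩ := exists_abs_sum_lamR_sq_sub_sum_totientWeight_le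
  obtain ⟨C₂, hC₂, hlog⟩ := exists_abs_sum_totientWeight_sub_log_le (a := max (1 / 2 - ε) (1 / 4))
    (by positivity) (by rw [max_lt_iff]; constructor <;> linarith)
  refine ⟨C₁ + C₂, by positivity, fun N q a R _ hq ha hR ↦ ?_⟩
  have hv : 0 ≤ vGY q := sum_nonneg fun p _ ↦ by positivity
  have hpow : R ^ (-max (1 / 2 - ε) (1 / 4)) ≤ R ^ (-(1 : ℝ) / 2 + ε) :=
    Real.rpow_le_rpow_of_exponent_le (by linarith) (by linarith [le_max_left (1 / 2 - ε) (1 / 4)])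
  set H := ∑ r ∈ Ioc 0 ⌊R⌋₊, totientWeight r
  have hH : |N / φ q * H - N / φ q * (Real.log R + cGY)| ≤
      N / φ q * (C₂ * R ^ (-(1 : ℝ) / 2 + ε)) := by
    rw [← mul_sub, abs_mul, abs_of_nonneg (by positivity)]
    gcongr
    exact (hlog R (by linarith)).trans (by gcongr)
  rw [filter_Icc_one_natCast_eq]
  calc _ ≤ _ := abs_sub_le _ (N / φ q * H) _
    _ ≤ C₁ * (N / φ q * vGY q + R ^ 2) + N / φ q * (C₂ * R ^ (-(1 : ℝ) / 2 + ε)) :=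
        add_le_add (hlamR N q a R hq ha (by linarith)) hH
    _ ≤ C₁ * (N / φ q * vGY q + R ^ 2) + N / φ q * (C₂ * R ^ (-(1 : ℝ) / 2 + ε)) +
          (C₂ * (N / φ q * vGY q + R ^ 2) + N / φ q * (C₁ * R ^ (-(1 : ℝ) / 2 + ε))) :=
        le_add_of_nonneg_right (by positivity)
    _ = _ := by ring
end

section
/- There is a constant C > 0 such that for all integers N ≥ 1, q ≥ 1, j ≥ 1, a with gcd(a,q) = 1 and all real R ≥ 2, one has |Σ_{n ≤ N, n ≡ a (mod q)} λ_R(n)·λ_R(n+jq) − (N/φ(q))·𝔖(jq)| ≤ C·( (N·g(q)/(φ(q)·R))·(j·d(j)/φ(j)) + R² ). -/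
open Finset ArithmeticFunction

/-!
Write `λ_R(n) = ∑_{d ∣ n} c_d` with `c_d = d μ(d) A(d)` and `A(d) = ∑_{r ≤ R, d ∣ r} μ²(r)/φ(r)`.
Counting the `n ≤ N` with `n ≡ a (mod q)`, `d ∣ n` and `e ∣ n + jq` costs an error at most `1` for
each pair `(d, e)`, and `∑ |c_d| ≤ ∑_{r ≤ R} (r/φ(r))² ≪ R` because `r/φ(r)` has a finite mean
square; this is the error `R²`.

In the main term the solvability condition `(d, e) ∣ j` and the density `1/[d, e]` combine into
`∑_{t ∣ (d, e)}` of a multiplicative coefficient, which diagonalizes the quadratic form in the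
`c_d`: it equals `(N/q) ∑_{t ≤ R} f(t) S_t²`, where `(q/φ(q)) ∑_t f(t)` is the Euler product `𝔖(jq)`
expanded, and `S_t = ∑_{k ∣ q, tk ≤ R} μ²(k)/φ(k)` is a truncation of the divisor sum `q/φ(q)`.
Replacing `S_t` by `q/φ(q)` costs, for each `k ∣ q`, the tail of `∑ |f|` beyond `R/k`, of size
`≪ (k/R) j d(j)/φ(j)`, and `∑_{k ∣ q} k μ²(k)/φ(k) = g(q)`.
-/

section SquarefreeExt

variable {R : Type*}

/-- The multiplicative function supported on the squarefree numbers whose value at a prime `p` is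
`c p`. -/
def squarefreeExt [CommMonoidWithZero R] (c : ℕ → R) : ArithmeticFunction R where
  toFun n := if Squarefree n then ∏ p ∈ n.primeFactors, c p else 0
  map_zero' := by simp

section CommMonoidWithZero

variable [CommMonoidWithZero R]

lemma squarefreeExt_apply (c : ℕ → R) (n : ℕ) :
    squarefreeExt c n = if Squarefree n then ∏ p ∈ n.primeFactors, c p else 0 :=
  rfl

lemma squarefreeExt_of_squarefree (c : ℕ → R) {n : ℕ} (hn : Squarefree n) :
    squarefreeExt c n = ∏ p ∈ n.primeFactors, c p :=
  if_pos hn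

lemma squarefreeExt_of_not_squarefree (c : ℕ → R) {n : ℕ} (hn : ¬Squarefree n) :
    squarefreeExt c n = 0 :=
  if_neg hn

lemma squarefreeExt_one (c : ℕ → R) : squarefreeExt c 1 = 1 := by
  simp [squarefreeExt_apply]

lemma squarefreeExt_prime (c : ℕ → R) {p : ℕ} (hp : p.Prime) : squarefreeExt c p = c p := by
  rw [squarefreeExt_of_squarefree c hp.prime.squarefree, hp.primeFactors, prod_singleton]

lemma squarefreeExt_prime_pow (c : ℕ → R) {p e : ℕ} (hp : p.Prime) (he : 2 ≤ e) :
    squarefreeExt c (p ^ e) = 0 :=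
  squarefreeExt_of_not_squarefree c fun h ↦ by
    have := ((Nat.squarefree_pow_iff hp.ne_one (by omega)).1 h).2
    omega

lemma squarefreeExt_mul_of_coprime (c : ℕ → R) {m n : ℕ} (h : m.Coprime n) :
    squarefreeExt c (m * n) = squarefreeExt c m * squarefreeExt c n := by
  simp only [squarefreeExt_apply, Nat.squarefree_mul h, h.primeFactors_mul,
    prod_union h.disjoint_primeFactors]
  split_ifs <;> simp_all

lemma squarefreeExt_mul_squarefreeExt (c c' : ℕ → R) (n : ℕ) :
    squarefreeExt c n * squarefreeExt c' n = squarefreeExt (fun p ↦ c p * c' p) n := by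
  simp only [squarefreeExt_apply]
  split_ifs <;> simp [prod_mul_distrib]

lemma squarefreeExt_congr {c c' : ℕ → R} {n : ℕ} (h : ∀ p, p.Prime → p ∣ n → c p = c' p) :
    squarefreeExt c n = squarefreeExt c' n := by
  simp only [squarefreeExt_apply]
  split_ifs
  · exact prod_congr rfl fun p hp ↦
      h p (Nat.prime_of_mem_primeFactors hp) (Nat.dvd_of_mem_primeFactors hp)
  · rfl

lemma squarefreeExt_ite_dvd_zero (c : ℕ → R) (q n : ℕ) :
    squarefreeExt (fun p ↦ if p ∣ q then 0 else c p) n =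
      if n.Coprime q then squarefreeExt c n else 0 := by
  split_ifs with h
  · refine squarefreeExt_congr fun p hp hpn ↦ if_neg fun hpq ↦ ?_
    exact Nat.not_coprime_of_dvd_of_dvd hp.one_lt hpn hpq h
  · obtain ⟨p, hp, hpn, hpq⟩ := Nat.Prime.not_coprime_iff_dvd.1 h
    by_cases hn : Squarefree n
    · rw [squarefreeExt_of_squarefree _ hn]
      exact prod_eq_zero (Nat.mem_primeFactors.2 ⟨hp, hpn, hn.ne_zero⟩) (if_pos hpq)
    · exact squarefreeExt_of_not_squarefree _ hn

lemma squarefreeExt_ite_dvd (c : ℕ → R) (j n : ℕ) :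
    squarefreeExt (fun p ↦ if p ∣ j then c p else 0) n =
      if n ∣ j then squarefreeExt c n else 0 := by
  by_cases hn : Squarefree n
  swap
  · simp [squarefreeExt_of_not_squarefree _ hn]
  split_ifs with h
  · exact squarefreeExt_congr fun p _ hpn ↦ if_pos (hpn.trans h)
  · obtain ⟨p, hp, hpj⟩ : ∃ p ∈ n.primeFactors, ¬p ∣ j := by
      by_contra! hall
      refine h (Nat.prod_primeFactors_of_squarefree hn ▸ prod_primes_dvd j (fun p hp ↦ ?_) hall)
      exact (Nat.prime_of_mem_primeFactors hp).prime
    rw [squarefreeExt_of_squarefree _ hn]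
    exact prod_eq_zero hp (if_neg hpj)

end CommMonoidWithZero

lemma sum_divisors_squarefreeExt [CommSemiring R] (c : ℕ → R) {n : ℕ} (hn : n ≠ 0) :
    ∑ d ∈ n.divisors, squarefreeExt c d = ∏ p ∈ n.primeFactors, (1 + c p) := by
  simp only [squarefreeExt_apply]
  rw [← sum_filter, Nat.sum_divisors_filter_squarefree hn, prod_one_add]
  have hfactors : (UniqueFactorizationMonoid.normalizedFactors n).toFinset = n.primeFactors := by
    rw [Nat.factors_eq]; rfl
  rw [hfactors]
  refine sum_congr rfl fun s hs ↦ ?_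
  have hprime : ∀ p ∈ s, p.Prime := fun p hp ↦
    Nat.prime_of_mem_primeFactors (mem_powerset.1 hs hp)
  rw [prod_val, Function.id_def, Nat.primeFactors_prod hprime]

lemma squarefreeExt_one_add [CommSemiring R] (c : ℕ → R) {n : ℕ} (hn : Squarefree n) :
    squarefreeExt (fun p ↦ 1 + c p) n = ∑ d ∈ n.divisors, squarefreeExt c d := by
  rw [sum_divisors_squarefreeExt c hn.ne_zero, squarefreeExt_of_squarefree _ hn]

lemma squarefreeExt_natCast [CommSemiring R] {n : ℕ} (hn : Squarefree n) :
    squarefreeExt (fun p ↦ (p : R)) n = n := by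
  rw [squarefreeExt_of_squarefree _ hn, ← Nat.cast_prod, Nat.prod_primeFactors_of_squarefree hn]

lemma squarefreeExt_neg_one [CommRing R] (n : ℕ) :
    squarefreeExt (fun _ ↦ (-1 : R)) n = moebius n := by
  by_cases hn : Squarefree n
  · rw [squarefreeExt_of_squarefree _ hn, prod_const, moebius_apply_of_squarefree hn,
      ← (cardDistinctFactors_eq_cardFactors_iff_squarefree hn.ne_zero).2 hn]
    push_cast
    rfl
  · rw [squarefreeExt_of_not_squarefree _ hn, moebius_eq_zero_of_not_squarefree hn, Int.cast_zero]

section Ordered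

variable [CommSemiring R] [PartialOrder R] [IsOrderedRing R] {c c' : ℕ → R}

lemma squarefreeExt_nonneg (hc : ∀ p, p.Prime → 0 ≤ c p) (n : ℕ) : 0 ≤ squarefreeExt c n := by
  rw [squarefreeExt_apply]
  split_ifs
  · exact prod_nonneg fun p hp ↦ hc p (Nat.prime_of_mem_primeFactors hp)
  · exact le_rfl

lemma squarefreeExt_mono (hc : ∀ p, p.Prime → 0 ≤ c p) (hcc' : ∀ p, p.Prime → c p ≤ c' p)
    (n : ℕ) : squarefreeExt c n ≤ squarefreeExt c' n := by
  simp only [squarefreeExt_apply]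
  split_ifs
  · exact prod_le_prod (fun p hp ↦ hc p (Nat.prime_of_mem_primeFactors hp))
      fun p hp ↦ hcc' p (Nat.prime_of_mem_primeFactors hp)
  · exact le_rfl

lemma squarefreeExt_mul_le (hc : ∀ p, p.Prime → 0 ≤ c p) (m n : ℕ) :
    squarefreeExt c (m * n) ≤ squarefreeExt c m * squarefreeExt c n := by
  by_cases h : Squarefree (m * n)
  · exact (squarefreeExt_mul_of_coprime c (Nat.coprime_of_squarefree_mul h)).le
  · rw [squarefreeExt_of_not_squarefree c h]
    exact mul_nonneg (squarefreeExt_nonneg hc m) (squarefreeExt_nonneg hc n)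

end Ordered

lemma norm_squarefreeExt [NormedField R] (c : ℕ → R) (n : ℕ) :
    ‖squarefreeExt c n‖ = squarefreeExt (fun p ↦ ‖c p‖) n := by
  simp only [squarefreeExt_apply]
  split_ifs <;> simp

-- Every `d < T` divides `T !`, so the partial sums are at most `∏ p ∣ T !, (1 + c p)`.
lemma summable_squarefreeExt_of_nonneg {c : ℕ → ℝ} (hc : ∀ p, p.Prime → 0 ≤ c p)
    (hsum : Summable fun p : Nat.Primes ↦ c p) : Summable (squarefreeExt c) := by
  refine summable_of_sum_range_le (c := Real.exp (∑' p : Nat.Primes, c p))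
    (squarefreeExt_nonneg hc) fun T ↦ ?_
  have hT : T.factorial ≠ 0 := T.factorial_ne_zero
  have hprime : ∀ p ∈ T.factorial.primeFactors, p.Prime := fun p ↦ Nat.prime_of_mem_primeFactors
  have hpartial (s : Finset Nat.Primes) : ∑ p ∈ s, c p ≤ ∑' p : Nat.Primes, c p :=
    hsum.sum_le_tsum s fun p _ ↦ hc p p.2
  calc ∑ d ∈ range T, squarefreeExt c d
      ≤ ∑ d ∈ T.factorial.divisors, squarefreeExt c d := by
        rw [← sum_erase (range T) (squarefreeExt c).map_zero]
        refine sum_le_sum_of_subset_of_nonneg (fun d hd ↦ Nat.mem_divisors.2 ⟨?_, hT⟩)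
          fun d _ _ ↦ squarefreeExt_nonneg hc d
        have ⟨hd0, hdT⟩ := mem_erase.1 hd
        exact Nat.dvd_factorial (Nat.pos_of_ne_zero hd0) (mem_range.1 hdT).le
    _ = ∏ p ∈ T.factorial.primeFactors, (1 + c p) := sum_divisors_squarefreeExt c hT
    _ ≤ ∏ p ∈ T.factorial.primeFactors, Real.exp (c p) :=
        prod_le_prod (fun p hp ↦ add_nonneg zero_le_one (hc p (hprime p hp)))
          fun p _ ↦ (add_comm 1 (c p)).trans_le (Real.add_one_le_exp _)
    _ = Real.exp (∑ p ∈ T.factorial.primeFactors.subtype Nat.Prime, c p) := by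
        rw [← Real.exp_sum, sum_subtype_of_mem c hprime]
    _ ≤ Real.exp (∑' p : Nat.Primes, c p) :=
        Real.exp_le_exp.2 (hpartial _)

lemma summable_norm_squarefreeExt [NormedField R] {c : ℕ → R}
    (hsum : Summable fun p : Nat.Primes ↦ ‖c p‖) : Summable fun n ↦ ‖squarefreeExt c n‖ := by
  simp only [norm_squarefreeExt]
  exact summable_squarefreeExt_of_nonneg (fun _ _ ↦ norm_nonneg _) hsum

lemma hasProd_one_add_squarefreeExt [NormedField R] [CompleteSpace R] {c : ℕ → R}
    (hsum : Summable fun p : Nat.Primes ↦ ‖c p‖) :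
    HasProd (fun p : Nat.Primes ↦ 1 + c p) (∑' n, squarefreeExt c n) := by
  have h := EulerProduct.eulerProduct_hasProd (squarefreeExt_one c)
    (squarefreeExt_mul_of_coprime c) (summable_norm_squarefreeExt hsum)
    (squarefreeExt c).map_zero
  refine h.congr_fun fun p ↦ ?_
  rw [tsum_eq_sum (s := range 2)]
  · simp [sum_range_succ, squarefreeExt_one, squarefreeExt_prime c p.2]
  · intro e he
    exact squarefreeExt_prime_pow c p.2 (not_lt.1 (mt mem_range.2 he))

end SquarefreeExt

section SieveWeight

lemma one_le_prime_sub_one {p : ℕ} (hp : p.Prime) : (1 : ℝ) ≤ p - 1 := by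
  have : (2 : ℝ) ≤ p := mod_cast hp.two_le
  linarith

lemma squarefreeExt_mul_natCast {R : Type*} [CommSemiring R] (c : ℕ → R) (n : ℕ) :
    squarefreeExt c n * n = squarefreeExt (fun p ↦ c p * p) n := by
  by_cases hn : Squarefree n
  · rw [← squarefreeExt_mul_squarefreeExt, squarefreeExt_natCast hn]
  · simp [squarefreeExt_of_not_squarefree _ hn]

lemma natCast_prod_primeFactors_sub_one (n : ℕ) :
    ((∏ p ∈ n.primeFactors, (p - 1) : ℕ) : ℝ) = ∏ p ∈ n.primeFactors, ((p : ℝ) - 1) := by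
  rw [Nat.cast_prod]
  exact prod_congr rfl fun p hp ↦ Nat.cast_pred (Nat.pos_of_mem_primeFactors hp)

lemma squarefreeExt_sub_one {n : ℕ} (hn : Squarefree n) :
    squarefreeExt (fun p ↦ (p : ℝ) - 1) n = n.totient := by
  have htotient : n.totient = ∏ p ∈ n.primeFactors, (p - 1) := by
    have h := n.totient_mul_prod_primeFactors
    rw [Nat.prod_primeFactors_of_squarefree hn, mul_comm] at h
    exact Nat.eq_of_mul_eq_mul_left (Nat.pos_of_ne_zero hn.ne_zero) h
  rw [squarefreeExt_of_squarefree _ hn, htotient, natCast_prod_primeFactors_sub_one]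

lemma div_totient_eq_prod {n : ℕ} (hn : n ≠ 0) :
    (n : ℝ) / n.totient = ∏ p ∈ n.primeFactors, (1 + ((p : ℝ) - 1)⁻¹) := by
  have h : (n.totient : ℝ) * ∏ p ∈ n.primeFactors, (p : ℝ) =
      n * ∏ p ∈ n.primeFactors, ((p : ℝ) - 1) := by
    rw [← natCast_prod_primeFactors_sub_one, ← Nat.cast_prod, ← Nat.cast_mul, ← Nat.cast_mul,
      n.totient_mul_prod_primeFactors]
  have hpos : ∀ p ∈ n.primeFactors, (p : ℝ) - 1 ≠ 0 := fun p hp ↦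
    (zero_lt_one.trans_le (one_le_prime_sub_one (Nat.prime_of_mem_primeFactors hp))).ne'
  have htotient : (n.totient : ℝ) ≠ 0 := by
    exact_mod_cast (Nat.totient_pos.2 (Nat.pos_of_ne_zero hn)).ne'
  calc (n : ℝ) / n.totient
      = (∏ p ∈ n.primeFactors, (p : ℝ)) / ∏ p ∈ n.primeFactors, ((p : ℝ) - 1) := by
        rw [div_eq_div_iff htotient (prod_ne_zero_iff.2 hpos), ← h, mul_comm]
    _ = ∏ p ∈ n.primeFactors, (1 + ((p : ℝ) - 1)⁻¹) := by
        rw [← prod_div_distrib]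
        refine prod_congr rfl fun p hp ↦ ?_
        have := hpos p hp
        field_simp
        ring

/-- The arithmetic function `μ²/φ`, which weights the terms of `λ_R`; see
`moebius_sq_div_totient`. -/
noncomputable def sieveWeight : ArithmeticFunction ℝ :=
  squarefreeExt fun p ↦ ((p : ℝ) - 1)⁻¹

lemma moebius_sq_div_totient (n : ℕ) :
    (moebius n : ℝ) ^ 2 / n.totient = sieveWeight n := by
  by_cases hn : Squarefree n
  · have hmoebius : (moebius n : ℝ) ^ 2 = 1 := mod_cast moebius_sq_eq_one_of_squarefree hn
    rw [hmoebius, one_div, ← squarefreeExt_sub_one hn, sieveWeight,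
      squarefreeExt_of_squarefree _ hn, squarefreeExt_of_squarefree _ hn, prod_inv_distrib]
  · simp [sieveWeight, squarefreeExt_of_not_squarefree _ hn, moebius_eq_zero_of_not_squarefree hn]

lemma sieveWeight_nonneg (n : ℕ) : 0 ≤ sieveWeight n :=
  squarefreeExt_nonneg
    (fun _ hp ↦ inv_nonneg.2 (zero_le_one.trans (one_le_prime_sub_one hp))) n

lemma sieveWeight_le_inv_totient (n : ℕ) : sieveWeight n ≤ (n.totient : ℝ)⁻¹ := by
  have hmoebius : (moebius n : ℝ) ^ 2 ≤ 1 := by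
    exact_mod_cast (sq_le_one_iff_abs_le_one _).2 (abs_moebius_le_one (n := n))
  rw [← moebius_sq_div_totient, ← one_div]
  gcongr

lemma sieveWeight_mul_le (m n : ℕ) : sieveWeight (m * n) ≤ sieveWeight m * sieveWeight n :=
  squarefreeExt_mul_le
    (fun _ hp ↦ inv_nonneg.2 (zero_le_one.trans (one_le_prime_sub_one hp))) m n

lemma sum_divisors_sieveWeight {n : ℕ} (hn : n ≠ 0) :
    ∑ d ∈ n.divisors, sieveWeight d = n / n.totient := by
  rw [sieveWeight, sum_divisors_squarefreeExt _ hn, div_totient_eq_prod hn]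

lemma gGY_nonneg (n : ℕ) : 0 ≤ gGY n := by
  refine prod_nonneg fun p hp ↦ ?_
  have := one_le_prime_sub_one (Nat.prime_of_mem_primeFactors hp)
  have : 0 < (p : ℝ) - 1 := by linarith
  positivity

lemma sum_divisors_sieveWeight_mul {n : ℕ} (hn : n ≠ 0) :
    ∑ d ∈ n.divisors, sieveWeight d * d = gGY n := by
  simp only [sieveWeight, squarefreeExt_mul_natCast]
  rw [sum_divisors_squarefreeExt _ hn, gGY]
  simp only [div_eq_inv_mul]

lemma div_totient_le_of_dvd {m n : ℕ} (hn : n ≠ 0) (h : m ∣ n) :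
    (m : ℝ) / m.totient ≤ n / n.totient := by
  rw [← sum_divisors_sieveWeight hn, ← sum_divisors_sieveWeight (ne_zero_of_dvd_ne_zero hn h)]
  exact sum_le_sum_of_subset_of_nonneg (Nat.divisors_subset_of_dvd hn h)
    fun d _ _ ↦ sieveWeight_nonneg d

lemma sieveWeight_mul_sum_divisors_le (n : ℕ) :
    sieveWeight n * ∑ d ∈ n.divisors, (d : ℝ) ≤ (n / n.totient) ^ 2 := by
  by_cases hn : Squarefree n
  swap
  · simp only [sieveWeight, squarefreeExt_of_not_squarefree _ hn, zero_mul]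
    positivity
  have hsigma : ∑ d ∈ n.divisors, (d : ℝ) = squarefreeExt (fun p ↦ 1 + (p : ℝ)) n := by
    rw [squarefreeExt_one_add _ hn]
    exact sum_congr rfl fun d hd ↦
      (squarefreeExt_natCast (hn.squarefree_of_dvd (Nat.dvd_of_mem_divisors hd))).symm
  rw [hsigma, div_totient_eq_prod hn.ne_zero, ← squarefreeExt_of_squarefree _ hn, pow_two,
    sieveWeight, squarefreeExt_mul_squarefreeExt, squarefreeExt_mul_squarefreeExt]
  refine squarefreeExt_mono (fun p hp ↦ ?_) (fun p hp ↦ ?_) n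
  · have := one_le_prime_sub_one hp
    positivity
  · have := one_le_prime_sub_one hp
    have : 0 < (p : ℝ) - 1 := by linarith
    field_simp
    linarith

end SieveWeight

section MeanValue

/-- The multiplicative function `h` with `∑_{d ∣ n} h(d) = (n/φ(n))²`; see
`sum_divisors_divTotientSqCoeff`. -/
noncomputable def divTotientSqCoeff : ArithmeticFunction ℝ :=
  squarefreeExt fun p ↦ (1 + ((p : ℝ) - 1)⁻¹) ^ 2 - 1

lemma divTotientSqCoeff_prime_nonneg {p : ℕ} (hp : p.Prime) :
    0 ≤ (1 + ((p : ℝ) - 1)⁻¹) ^ 2 - 1 := by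
  have : 0 ≤ ((p : ℝ) - 1)⁻¹ := inv_nonneg.2 (zero_le_one.trans (one_le_prime_sub_one hp))
  nlinarith

lemma divTotientSqCoeff_nonneg (n : ℕ) : 0 ≤ divTotientSqCoeff n :=
  squarefreeExt_nonneg (fun _ ↦ divTotientSqCoeff_prime_nonneg) n

lemma sum_divisors_divTotientSqCoeff {n : ℕ} (hn : n ≠ 0) :
    ∑ d ∈ n.divisors, divTotientSqCoeff d = (n / n.totient) ^ 2 := by
  rw [divTotientSqCoeff, sum_divisors_squarefreeExt _ hn, div_totient_eq_prod hn, ← prod_pow]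
  simp only [add_sub_cancel]

lemma summable_primes_inv_sq (C : ℝ) : Summable fun p : Nat.Primes ↦ C * ((p : ℝ) ^ 2)⁻¹ :=
  ((Real.summable_nat_pow_inv.2 one_lt_two).comp_injective Nat.Primes.coe_nat_injective).mul_left C

lemma summable_divTotientSqCoeff_div : Summable fun n : ℕ ↦ divTotientSqCoeff n / n := by
  have hdiv (n : ℕ) : divTotientSqCoeff n / n =
      squarefreeExt (fun p ↦ ((1 + ((p : ℝ) - 1)⁻¹) ^ 2 - 1) / p) n := by
    by_cases hn : Squarefree n
    · rw [divTotientSqCoeff, squarefreeExt_of_squarefree _ hn, squarefreeExt_of_squarefree _ hn,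
        prod_div_distrib, ← Nat.cast_prod, Nat.prod_primeFactors_of_squarefree hn]
    · simp [divTotientSqCoeff, squarefreeExt_of_not_squarefree _ hn]
  have hnonneg (p : ℕ) (hp : p.Prime) : 0 ≤ ((1 + ((p : ℝ) - 1)⁻¹) ^ 2 - 1) / p :=
    div_nonneg (divTotientSqCoeff_prime_nonneg hp) p.cast_nonneg
  simp only [hdiv]
  refine summable_squarefreeExt_of_nonneg hnonneg ?_
  refine (summable_primes_inv_sq 6).of_nonneg_of_le (fun p ↦ hnonneg p p.2) fun ⟨p, hp⟩ ↦ ?_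
  have hp1 := one_le_prime_sub_one hp
  have hp0 : 0 < (p : ℝ) - 1 := by linarith
  have hp0' : 0 < (p : ℝ) := by linarith
  rw [← div_eq_mul_inv, div_le_div_iff₀ hp0' (by positivity)]
  field_simp
  nlinarith

/-- The mean value `∑ h(d)/d` of `(n/φ(n))²`, with `h = divTotientSqCoeff`. -/
noncomputable def divTotientSqMean : ℝ := ∑' n : ℕ, divTotientSqCoeff n / n

lemma divTotientSqMean_nonneg : 0 ≤ divTotientSqMean :=
  tsum_nonneg fun n ↦ div_nonneg (divTotientSqCoeff_nonneg n) n.cast_nonneg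

lemma sum_divTotientSqCoeff_div_le (s : Finset ℕ) :
    ∑ d ∈ s, divTotientSqCoeff d / d ≤ divTotientSqMean :=
  summable_divTotientSqCoeff_div.sum_le_tsum s fun n _ ↦
    div_nonneg (divTotientSqCoeff_nonneg n) n.cast_nonneg

lemma sum_div_totient_sq_le (M : ℕ) :
    ∑ n ∈ Icc 1 M, ((n : ℝ) / n.totient) ^ 2 ≤ divTotientSqMean * M := by
  calc ∑ n ∈ Icc 1 M, ((n : ℝ) / n.totient) ^ 2
      = ∑ n ∈ Ioc 0 M, (divTotientSqCoeff * (zeta : ArithmeticFunction ℝ)) n := by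
        refine sum_congr rfl fun n hn ↦ ?_
        rw [coe_mul_zeta_apply,
          sum_divisors_divTotientSqCoeff (Nat.one_le_iff_ne_zero.1 (mem_Icc.1 hn).1)]
    _ = ∑ d ∈ Ioc 0 M, divTotientSqCoeff d * (M / d : ℕ) := sum_Ioc_mul_zeta_eq_sum _ M
    _ ≤ ∑ d ∈ Ioc 0 M, divTotientSqCoeff d / d * M := by
        refine sum_le_sum fun d _ ↦ ?_
        rw [div_mul_eq_mul_div, mul_div_assoc]
        exact mul_le_mul_of_nonneg_left Nat.cast_div_le (divTotientSqCoeff_nonneg d)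
    _ ≤ divTotientSqMean * M := by
        rw [← sum_mul]
        exact mul_le_mul_of_nonneg_right (sum_divTotientSqCoeff_div_le _) M.cast_nonneg

lemma sum_mul_sum_divisors_le {c h : ℕ → ℝ} (hc : ∀ n, 0 ≤ c n) (hh : ∀ n, 0 ≤ h n) (T : ℕ) :
    ∑ n ∈ range T, c n * ∑ d ∈ n.divisors, h d ≤
      ∑ d ∈ range T, h d * ∑ m ∈ range T, c (d * m) := by
  have hnonneg (x : ℕ × ℕ) : 0 ≤ h x.1 * c (x.1 * x.2) := mul_nonneg (hh _) (hc _)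
  have hsub {n : ℕ} (hn : n ∈ range T) :
      n.divisorsAntidiagonal ⊆ {x ∈ range T ×ˢ range T | x.1 * x.2 = n} := fun x hx ↦ by
    have hlt {d : ℕ} (hd : d ∣ n) : d < T :=
      (Nat.le_of_dvd (Nat.pos_of_ne_zero (Nat.mem_divisorsAntidiagonal.1 hx).2) hd).trans_lt
        (mem_range.1 hn)
    have hxn := (Nat.mem_divisorsAntidiagonal.1 hx).1
    exact mem_filter.2 ⟨mem_product.2 ⟨mem_range.2 (hlt ⟨_, hxn.symm⟩),
      mem_range.2 (hlt ⟨_, (mul_comm _ _).trans hxn |>.symm⟩)⟩, hxn⟩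
  calc ∑ n ∈ range T, c n * ∑ d ∈ n.divisors, h d
      = ∑ n ∈ range T, ∑ x ∈ n.divisorsAntidiagonal, h x.1 * c (x.1 * x.2) := by
        refine sum_congr rfl fun n _ ↦ ?_
        rw [mul_comm, sum_mul, ← Nat.sum_divisorsAntidiagonal fun d _ ↦ h d * c n]
        exact sum_congr rfl fun x hx ↦ by rw [(Nat.mem_divisorsAntidiagonal.1 hx).1]
    _ ≤ ∑ n ∈ range T, ∑ x ∈ range T ×ˢ range T with x.1 * x.2 = n, h x.1 * c (x.1 * x.2) :=
        sum_le_sum fun n hn ↦ sum_le_sum_of_subset_of_nonneg (hsub hn) fun x _ _ ↦ hnonneg x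
    _ ≤ ∑ x ∈ range T ×ˢ range T, h x.1 * c (x.1 * x.2) :=
        sum_fiberwise_le_sum_of_sum_fiber_nonneg fun _ _ ↦ sum_nonneg fun x _ ↦ hnonneg x
    _ = ∑ d ∈ range T, h d * ∑ m ∈ range T, c (d * m) := by
        simp only [sum_product, mul_sum]

lemma sum_range_inv_sq_tail_le {y : ℝ} (hy : 0 < y) (T : ℕ) :
    ∑ n ∈ range T, (if y < n then ((n : ℝ) ^ 2)⁻¹ else 0) ≤ 2 / y := by
  rw [← sum_filter]
  calc ∑ n ∈ range T with y < ((n : ℕ) : ℝ), ((n : ℝ) ^ 2)⁻¹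
      ≤ ∑ n ∈ Ioo ⌊y⌋₊ T, ((n : ℝ) ^ 2)⁻¹ := by
        refine sum_le_sum_of_subset_of_nonneg (fun n hn ↦ ?_) fun _ _ _ ↦ by positivity
        obtain ⟨hnT, hyn⟩ := mem_filter.1 hn
        exact mem_Ioo.2 ⟨(Nat.floor_lt hy.le).2 hyn, mem_range.1 hnT⟩
    _ ≤ 2 / (⌊y⌋₊ + 1) := sum_Ioo_inv_sq_le _ _
    _ ≤ 2 / y := by gcongr; exact (Nat.lt_floor_add_one y).le

lemma sum_range_inv_totient_sq_tail_le {x : ℝ} (hx : 0 < x) (T : ℕ) :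
    ∑ n ∈ range T, (if x < n then ((n.totient : ℝ) ^ 2)⁻¹ else 0) ≤ 2 * divTotientSqMean / x := by
  set c : ℕ → ℝ := fun n ↦ if x < n then ((n : ℝ) ^ 2)⁻¹ else 0 with hc
  have hinner (d : ℕ) : divTotientSqCoeff d * ∑ m ∈ range T, c (d * m) ≤
      divTotientSqCoeff d / d * (2 / x) := by
    rcases d.eq_zero_or_pos with rfl | hd
    · simp
    have hd' : (0 : ℝ) < d := mod_cast hd
    have hcmul (m : ℕ) : c (d * m) =
        ((d : ℝ) ^ 2)⁻¹ * if x / d < m then ((m : ℝ) ^ 2)⁻¹ else 0 := by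
      simp only [hc, Nat.cast_mul, div_lt_iff₀' hd', mul_ite, mul_zero, mul_pow, mul_inv]
    calc divTotientSqCoeff d * ∑ m ∈ range T, c (d * m)
        = divTotientSqCoeff d * (((d : ℝ) ^ 2)⁻¹ *
            ∑ m ∈ range T, if x / d < m then ((m : ℝ) ^ 2)⁻¹ else 0) := by
          simp only [hcmul, mul_sum]
      _ ≤ divTotientSqCoeff d * (((d : ℝ) ^ 2)⁻¹ * (2 / (x / d))) := by
          gcongr
          · exact divTotientSqCoeff_nonneg d
          · exact sum_range_inv_sq_tail_le (by positivity) T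
      _ = divTotientSqCoeff d / d * (2 / x) := by field_simp
  calc ∑ n ∈ range T, (if x < n then ((n.totient : ℝ) ^ 2)⁻¹ else 0)
      = ∑ n ∈ range T, c n * ∑ d ∈ n.divisors, divTotientSqCoeff d := by
        refine sum_congr rfl fun n _ ↦ ?_
        rcases eq_or_ne n 0 with rfl | hn
        · simp [hc]
        · rw [sum_divisors_divTotientSqCoeff hn]
          simp only [hc]
          split_ifs
          · field_simp
          · simp
    _ ≤ ∑ d ∈ range T, divTotientSqCoeff d * ∑ m ∈ range T, c (d * m) :=
        sum_mul_sum_divisors_le (fun n ↦ by positivity) divTotientSqCoeff_nonneg T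
    _ ≤ ∑ d ∈ range T, divTotientSqCoeff d / d * (2 / x) := sum_le_sum fun d _ ↦ hinner d
    _ ≤ divTotientSqMean * (2 / x) := by
        rw [← sum_mul]
        exact mul_le_mul_of_nonneg_right (sum_divTotientSqCoeff_div_le _) (by positivity)
    _ = 2 * divTotientSqMean / x := by ring

end MeanValue

section SingularSeries

/-- The local coefficients of the Euler product
`𝔖(jq) = (q/φ(q)) ∏_p (1 + singLocalCoeff q j p)`. -/
noncomputable def singLocalCoeff (q j p : ℕ) : ℝ :=
  if p ∣ q then 0 else if p ∣ j then ((p : ℝ) - 1)⁻¹ else -((p : ℝ) - 1)⁻¹ ^ 2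

/-- The coefficients of the series `𝔖(jq) = (q/φ(q)) ∑_t singCoeff q j t` obtained by expanding the
Euler product. -/
noncomputable def singCoeff (q j : ℕ) : ArithmeticFunction ℝ :=
  squarefreeExt (singLocalCoeff q j)

lemma norm_singLocalCoeff_le (q : ℕ) {j p : ℕ} (hp : p.Prime) (hpj : ¬p ∣ j) :
    ‖singLocalCoeff q j p‖ ≤ 4 * ((p : ℝ) ^ 2)⁻¹ := by
  have hp1 := one_le_prime_sub_one hp
  have : 0 < (p : ℝ) - 1 := by linarith
  rw [singLocalCoeff, if_neg hpj]
  split_ifs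
  · rw [norm_zero]
    positivity
  · rw [norm_neg, Real.norm_of_nonneg (by positivity), inv_pow, ← div_eq_mul_inv, inv_eq_one_div,
      div_le_div_iff₀ (by positivity) (by nlinarith)]
    nlinarith

lemma summable_norm_singLocalCoeff (q : ℕ) {j : ℕ} (hj : j ≠ 0) :
    Summable fun p : Nat.Primes ↦ ‖singLocalCoeff q j p‖ := by
  have hfinite : {p : Nat.Primes | (p : ℕ) ∣ j}.Finite :=
    .of_injOn (f := fun p : Nat.Primes ↦ (p : ℕ)) (t := j.divisors)
      (fun p hp ↦ Nat.mem_divisors.2 ⟨hp, hj⟩) Nat.Primes.coe_nat_injective.injOn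
      j.divisors.finite_toSet
  have hbound : ∀ᶠ p : Nat.Primes in Filter.cofinite,
      ‖singLocalCoeff q j p‖ ≤ 4 * ((p : ℝ) ^ 2)⁻¹ :=
    Filter.mem_of_superset hfinite.compl_mem_cofinite fun p hpj ↦
      norm_singLocalCoeff_le q p.2 hpj
  exact (Summable.of_norm_bounded_eventually (summable_primes_inv_sq 4) hbound).norm

lemma summable_singCoeff (q : ℕ) {j : ℕ} (hj : j ≠ 0) : Summable (singCoeff q j) :=
  (summable_norm_squarefreeExt (summable_norm_singLocalCoeff q hj)).of_norm

lemma hasProd_one_add_singLocalCoeff (q : ℕ) {j : ℕ} (hj : j ≠ 0) :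
    HasProd (fun p : Nat.Primes ↦ 1 + singLocalCoeff q j p) (∑' t, singCoeff q j t) :=
  hasProd_one_add_squarefreeExt (summable_norm_singLocalCoeff q hj)

lemma hasProd_mul_ite_dvd {M : Type*} [CommMonoid M] [TopologicalSpace M] [ContinuousMul M]
    {f : Nat.Primes → M} {a : M} (hf : HasProd f a) (u : ℕ → M) {n : ℕ} (hn : n ≠ 0) :
    HasProd (fun p ↦ f p * if (p : ℕ) ∣ n then u p else 1) (a * ∏ p ∈ n.primeFactors, u p) := by
  refine hf.mul ?_
  have h := hasProd_prod_of_ne_finset_one (L := SummationFilter.unconditional _)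
    (f := fun p : Nat.Primes ↦ if (p : ℕ) ∣ n then u p else 1)
    (s := n.primeFactors.subtype Nat.Prime) fun p hp ↦ if_neg fun hpn ↦
      hp (mem_subtype.2 (Nat.mem_primeFactors.2 ⟨p.2, hpn, hn⟩))
  convert h using 1
  refine (prod_congr rfl fun p hp ↦ ?_).trans
    (prod_subtype_of_mem (fun p ↦ if p ∣ n then u p else 1)
      fun p ↦ Nat.prime_of_mem_primeFactors).symm
  exact (if_pos (Nat.dvd_of_mem_primeFactors hp)).symm

lemma hasProd_twinC :
    HasProd (fun p : Nat.Primes ↦ 1 + singLocalCoeff 2 1 p) twinC := by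
  have h := hasProd_one_add_singLocalCoeff 2 one_ne_zero
  have htwin : ∏' p : Nat.Primes, (1 + singLocalCoeff 2 1 p) = twinC := by
    refine tprod_congr fun ⟨p, hp⟩ ↦ ?_
    rcases hp.two_le.eq_or_lt with rfl | h2
    · simp [singLocalCoeff]
    · have hp2 : ¬p ∣ 2 := Nat.not_dvd_of_pos_of_lt two_pos h2
      simp [singLocalCoeff, hp2, hp.ne_one, h2, sub_eq_add_neg]
  exact htwin ▸ h.tprod_eq ▸ h

lemma prod_primeFactors_even {M : Type*} [CommMonoid M] (u : ℕ → M) {k : ℕ} (hk : k ≠ 0)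
    (h2 : 2 ∣ k) :
    ∏ p ∈ k.primeFactors, u p = u 2 * ∏ p ∈ k.primeFactors with 2 < p, u p := by
  have h2mem : 2 ∈ k.primeFactors := Nat.mem_primeFactors.2 ⟨Nat.prime_two, h2, hk⟩
  rw [← mul_prod_erase _ _ h2mem]
  congr 2
  ext p
  simp only [mem_erase, mem_filter, and_comm (a := p ∈ k.primeFactors), and_congr_left_iff]
  exact fun hp ↦ ⟨fun h ↦ (Nat.prime_of_mem_primeFactors hp).two_le.lt_of_ne' h, ne_of_gt⟩

lemma tsum_singCoeff_one {k : ℕ} (hk : k ≠ 0) : ∑' t, singCoeff 1 k t = singSeries k := by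
  have hprod := hasProd_one_add_singLocalCoeff 1 hk
  by_cases h2 : 2 ∣ k
  · rw [singSeries, if_pos ⟨h2, hk⟩]
    have htwin := hasProd_mul_ite_dvd hasProd_twinC
      (fun p ↦ if 2 < p then ((p : ℝ) - 1) / (p - 2) else 2) hk
    rw [prod_primeFactors_even _ hk h2, prod_congr rfl fun p hp ↦ if_pos (mem_filter.1 hp).2,
      if_neg (lt_irrefl 2), ← mul_assoc, mul_comm twinC] at htwin
    refine hprod.unique (htwin.congr_fun fun ⟨p, hp⟩ ↦ ?_)
    rcases hp.two_le.eq_or_lt with rfl | hp2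
    · norm_num [singLocalCoeff, h2]
    · have hp2' : ¬p ∣ 2 := Nat.not_dvd_of_pos_of_lt two_pos hp2
      have : (2 : ℝ) < p := mod_cast hp2
      have hsub1 : (p : ℝ) - 1 ≠ 0 := by linarith
      have hsub2 : (p : ℝ) - 2 ≠ 0 := by linarith
      simp only [singLocalCoeff, Nat.dvd_one, hp.ne_one, hp2, hp2', if_true, if_false]
      split_ifs
      · field_simp
        ring
      · rw [mul_one]
  · rw [singSeries, if_neg fun h ↦ h2 h.1, ← hprod.tprod_eq]
    exact tprod_of_exists_eq_zero ⟨⟨2, Nat.prime_two⟩, by norm_num [singLocalCoeff, h2]⟩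

lemma singSeries_mul_eq {q j : ℕ} (hq : q ≠ 0) (hj : j ≠ 0) :
    singSeries (j * q) = q / q.totient * ∑' t, singCoeff q j t := by
  have hmul := hasProd_mul_ite_dvd (hasProd_one_add_singLocalCoeff q hj)
    (fun p ↦ 1 + ((p : ℝ) - 1)⁻¹) hq
  rw [← div_totient_eq_prod hq, mul_comm] at hmul
  rw [← tsum_singCoeff_one (mul_ne_zero hj hq)]
  refine (hasProd_one_add_singLocalCoeff 1 (mul_ne_zero hj hq)).unique
    (hmul.congr_fun fun ⟨p, hp⟩ ↦ ?_)
  by_cases hpq : p ∣ q <;> simp [singLocalCoeff, hp.ne_one, hp.dvd_mul, hpq]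

lemma abs_singCoeff_le (q j t : ℕ) :
    |singCoeff q j t| ≤
      sieveWeight t ^ 2 * ∑ u ∈ t.divisors, if u ∣ j then (u.totient : ℝ) else 0 := by
  by_cases ht : Squarefree t
  swap
  · simp [singCoeff, sieveWeight, squarefreeExt_of_not_squarefree _ ht]
  have hgcd : ∑ u ∈ t.divisors, (if u ∣ j then (u.totient : ℝ) else 0) =
      squarefreeExt (fun p ↦ 1 + if p ∣ j then (p : ℝ) - 1 else 0) t := by
    rw [squarefreeExt_one_add _ ht]
    refine sum_congr rfl fun u hu ↦ ?_
    rw [squarefreeExt_ite_dvd,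
      squarefreeExt_sub_one (ht.squarefree_of_dvd (Nat.dvd_of_mem_divisors hu))]
  rw [hgcd, pow_two, sieveWeight, squarefreeExt_mul_squarefreeExt,
    squarefreeExt_mul_squarefreeExt, ← Real.norm_eq_abs, singCoeff, norm_squarefreeExt]
  refine squarefreeExt_mono (fun _ _ ↦ norm_nonneg _) (fun p hp ↦ ?_) t
  have hp1 := one_le_prime_sub_one hp
  have hp0 : 0 < (p : ℝ) - 1 := by linarith
  rw [singLocalCoeff]
  split_ifs
  · simp only [norm_zero]
    positivity
  · simp only [norm_zero]
    positivity
  · rw [Real.norm_of_nonneg (inv_nonneg.2 hp0.le)]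
    field_simp
    linarith
  · rw [norm_neg, Real.norm_of_nonneg (by positivity)]
    exact le_of_eq (by ring)

lemma sum_range_sieveWeight_sq_tail_le {u : ℕ} (hu : 0 < u) {x : ℝ} (hx : 0 < x) (T : ℕ) :
    ∑ m ∈ range T, (if x < (u * m : ℕ) then sieveWeight (u * m) ^ 2 else 0) ≤
      ((u.totient : ℝ) ^ 2)⁻¹ * (2 * divTotientSqMean / x * u) := by
  have hu' : (0 : ℝ) < u := mod_cast hu
  calc ∑ m ∈ range T, (if x < (u * m : ℕ) then sieveWeight (u * m) ^ 2 else 0)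
      ≤ ∑ m ∈ range T, ((u.totient : ℝ) ^ 2)⁻¹ *
          if x / u < m then ((m.totient : ℝ) ^ 2)⁻¹ else 0 := by
        refine sum_le_sum fun m _ ↦ ?_
        simp only [Nat.cast_mul, div_lt_iff₀' hu', mul_ite, mul_zero]
        split_ifs
        · rw [← mul_inv, ← mul_pow, ← inv_pow, mul_inv]
          refine pow_le_pow_left₀ (sieveWeight_nonneg _) ((sieveWeight_mul_le u m).trans ?_) 2
          exact mul_le_mul (sieveWeight_le_inv_totient u) (sieveWeight_le_inv_totient m)
            (sieveWeight_nonneg m) (by positivity)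
        · exact le_rfl
    _ ≤ ((u.totient : ℝ) ^ 2)⁻¹ * (2 * divTotientSqMean / (x / u)) := by
        rw [← mul_sum]
        gcongr
        exact sum_range_inv_totient_sq_tail_le (by positivity) T
    _ = ((u.totient : ℝ) ^ 2)⁻¹ * (2 * divTotientSqMean / x * u) := by
        rw [div_div_eq_mul_div, div_mul_eq_mul_div]

lemma sum_range_abs_singCoeff_tail_le (q : ℕ) {j : ℕ} (hj : j ≠ 0) {x : ℝ} (hx : 0 < x) (T : ℕ) :
    ∑ t ∈ range T, (if x < t then |singCoeff q j t| else 0) ≤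
      2 * divTotientSqMean / x * (j * j.divisors.card / j.totient) := by
  set c : ℕ → ℝ := fun t ↦ if x < t then sieveWeight t ^ 2 else 0 with hc
  have hinner (u : ℕ) (hu : u ∈ j.divisors) : u.totient * ∑ m ∈ range T, c (u * m) ≤
      2 * divTotientSqMean / x * (j / j.totient) := by
    have hu0 := Nat.pos_of_mem_divisors hu
    have : (0 : ℝ) < u.totient := mod_cast Nat.totient_pos.2 hu0
    have := divTotientSqMean_nonneg
    calc u.totient * ∑ m ∈ range T, c (u * m)
        ≤ u.totient * (((u.totient : ℝ) ^ 2)⁻¹ * (2 * divTotientSqMean / x * u)) :=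
          mul_le_mul_of_nonneg_left (sum_range_sieveWeight_sq_tail_le hu0 hx T) (by positivity)
      _ = 2 * divTotientSqMean / x * (u / u.totient) := by field_simp
      _ ≤ 2 * divTotientSqMean / x * (j / j.totient) :=
          mul_le_mul_of_nonneg_left (div_totient_le_of_dvd hj (Nat.dvd_of_mem_divisors hu))
            (by positivity)
  calc ∑ t ∈ range T, (if x < t then |singCoeff q j t| else 0)
      ≤ ∑ t ∈ range T, c t * ∑ u ∈ t.divisors, if u ∣ j then (u.totient : ℝ) else 0 := by
        refine sum_le_sum fun t _ ↦ ?_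
        simp only [hc, ite_mul, zero_mul]
        split_ifs
        · exact abs_singCoeff_le q j t
        · exact le_rfl
    _ ≤ ∑ u ∈ range T, (if u ∣ j then (u.totient : ℝ) else 0) * ∑ m ∈ range T, c (u * m) :=
        sum_mul_sum_divisors_le (fun t ↦ by positivity) (fun u ↦ by positivity) T
    _ = ∑ u ∈ range T with u ∣ j, u.totient * ∑ m ∈ range T, c (u * m) := by
        simp only [ite_mul, zero_mul, sum_filter]
    _ ≤ ∑ u ∈ j.divisors, u.totient * ∑ m ∈ range T, c (u * m) := by
        refine sum_le_sum_of_subset_of_nonneg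
          (fun u hu ↦ Nat.mem_divisors.2 ⟨(mem_filter.1 hu).2, hj⟩) fun u _ _ ↦ ?_
        exact mul_nonneg u.totient.cast_nonneg (sum_nonneg fun m _ ↦ by positivity)
    _ ≤ ∑ _u ∈ j.divisors, 2 * divTotientSqMean / x * (j / j.totient) := sum_le_sum hinner
    _ = 2 * divTotientSqMean / x * (j * j.divisors.card / j.totient) := by
        rw [sum_const, nsmul_eq_mul]
        ring

end SingularSeries

section Counting

lemma abs_card_filter_modEq_sub_le (N v : ℕ) {L : ℕ} (hL : 0 < L) :
    |(#{n ∈ Icc 1 N | n ≡ v [MOD L]} : ℝ) - N * (L : ℝ)⁻¹| ≤ 1 := by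
  have hcard := Nat.Ioc_filter_modEq_card 0 N hL v
  have hmono : ⌊(((0 : ℕ) : ℚ) - v) / L⌋ ≤ ⌊((N : ℚ) - v) / L⌋ := by
    gcongr
    exact N.zero_le
  rw [max_eq_left (sub_nonneg.2 hmono)] at hcard
  have hcard' : (#{n ∈ Icc 1 N | n ≡ v [MOD L]} : ℚ) =
      ⌊((N : ℚ) - v) / L⌋ - ⌊(((0 : ℕ) : ℚ) - v) / L⌋ := mod_cast hcard
  have hdiff : ((N : ℚ) - v) / L - (((0 : ℕ) : ℚ) - v) / L = N * (L : ℚ)⁻¹ := by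
    push_cast
    ring
  have hrat : |(#{n ∈ Icc 1 N | n ≡ v [MOD L]} : ℚ) - N * (L : ℚ)⁻¹| ≤ 1 := by
    rw [hcard', ← hdiff, abs_le]
    constructor <;>
      linarith [Int.floor_le (((N : ℚ) - v) / L), Int.lt_floor_add_one (((N : ℚ) - v) / L),
        Int.floor_le ((((0 : ℕ) : ℚ) - v) / L), Int.lt_floor_add_one ((((0 : ℕ) : ℚ) - v) / L)]
  have hreal := (Rat.cast_le (K := ℝ)).2 hrat
  push_cast at hreal
  exact hreal

lemma exists_modEq_dvd_dvd_add {q d e k : ℕ} (a : ℕ) (he : e ≠ 0) (hq : q.Coprime (d.lcm e))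
    (hk : d.gcd e ∣ k) : ∃ v, v ≡ a [MOD q] ∧ d ∣ v ∧ e ∣ v + k := by
  have hcompat : 0 ≡ (e - 1) * k [MOD d.gcd e] :=
    (Nat.modEq_zero_iff_dvd.2 (hk.mul_left (e - 1))).symm
  obtain ⟨u, hud, hue⟩ := Nat.chineseRemainder' hcompat
  obtain ⟨v, hva, hvu⟩ := Nat.chineseRemainder hq a u
  refine ⟨v, hva, (hvu.dvd_iff (d.dvd_lcm_left e)).2 (Nat.modEq_zero_iff_dvd.1 hud), ?_⟩
  have hmul : (e - 1) * k + k = e * k := by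
    rw [← Nat.succ_mul, Nat.succ_eq_add_one, Nat.sub_add_cancel (Nat.one_le_iff_ne_zero.2 he)]
  have hvk : v + k ≡ e * k [MOD e] :=
    hmul ▸ ((hvu.of_dvd (d.dvd_lcm_right e)).trans hue).add_right k
  exact (hvk.dvd_iff dvd_rfl).2 (dvd_mul_right e k)

lemma modEq_and_dvd_and_dvd_add_iff {q a d e k v : ℕ} (hq : q.Coprime (d.lcm e))
    (hva : v ≡ a [MOD q]) (hvd : d ∣ v) (hve : e ∣ v + k) (n : ℕ) :
    n ≡ a [MOD q] ∧ d ∣ n ∧ e ∣ n + k ↔ n ≡ v [MOD q * d.lcm e] := by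
  rw [← Nat.modEq_and_modEq_iff_modEq_mul hq]
  refine and_congr ⟨fun h ↦ h.trans hva.symm, fun h ↦ h.trans hva⟩ ⟨fun ⟨hd, he⟩ ↦ ?_, fun h ↦ ?_⟩
  · refine Nat.mod_lcm ?_ (Nat.ModEq.add_right_cancel' k ?_)
    · exact (Nat.modEq_zero_iff_dvd.2 hd).trans (Nat.modEq_zero_iff_dvd.2 hvd).symm
    · exact (Nat.modEq_zero_iff_dvd.2 he).trans (Nat.modEq_zero_iff_dvd.2 hve).symm
  · exact ⟨(h.dvd_iff (d.dvd_lcm_left e)).2 hvd,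
      ((h.add_right k).dvd_iff (d.dvd_lcm_right e)).2 hve⟩

lemma coprime_and_coprime_and_gcd_dvd {q a d e j n : ℕ} (ha : a.Coprime q) (hna : n ≡ a [MOD q])
    (hd : d ∣ n) (he : e ∣ n + j * q) : d.Coprime q ∧ e.Coprime q ∧ d.gcd e ∣ j := by
  have hnq : n.Coprime q := Nat.coprime_iff_gcd_eq_one.2 (hna.gcd_eq.trans ha)
  have hdq : d.Coprime q := hnq.coprime_dvd_left hd
  refine ⟨hdq, ((Nat.coprime_add_mul_right_left n q j).2 hnq).coprime_dvd_left he, ?_⟩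
  refine (hdq.coprime_dvd_left (d.gcd_dvd_left e)).dvd_of_dvd_mul_right ?_
  exact (Nat.dvd_add_right ((d.gcd_dvd_left e).trans hd)).1 ((d.gcd_dvd_right e).trans he)

/-- The density of the `n ≡ a (mod q)` with `d ∣ n` and `e ∣ n + jq`, which is the same for all
residues `a` coprime to `q`. -/
noncomputable def shiftDensity (q j d e : ℕ) : ℝ :=
  if d.Coprime q ∧ e.Coprime q ∧ d.gcd e ∣ j then ((q * d.lcm e : ℕ) : ℝ)⁻¹ else 0

lemma abs_card_sub_shiftDensity_le (N : ℕ) {q j a d e : ℕ} (hq : q ≠ 0) (ha : a.Coprime q)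
    (hd : d ≠ 0) (he : e ≠ 0) :
    |(#{n ∈ Icc 1 N | n ≡ a [MOD q] ∧ d ∣ n ∧ e ∣ n + j * q} : ℝ)
      - N * shiftDensity q j d e| ≤ 1 := by
  rw [shiftDensity]
  split_ifs with h
  · have hcop : q.Coprime (d.lcm e) :=
      ((Nat.Coprime.mul_left h.1 h.2.1).coprime_dvd_left (Nat.lcm_dvd_mul d e)).symm
    obtain ⟨v, hva, hvd, hve⟩ := exists_modEq_dvd_dvd_add a he hcop (h.2.2.mul_right q)
    simp only [modEq_and_dvd_and_dvd_add_iff hcop hva hvd hve]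
    exact abs_card_filter_modEq_sub_le N v (by positivity)
  · rw [filter_eq_empty_iff.2 fun n _ ⟨hna, hdn, hen⟩ ↦
      h (coprime_and_coprime_and_gcd_dvd ha hna hdn hen)]
    simp

end Counting

section DivisorSums

variable {R : Type*}

lemma sum_Icc_sum_divisors_gcd [AddCommMonoid R] (f : ℕ → ℕ → R) (M n : ℕ) :
    ∑ r ∈ Icc 1 M, ∑ d ∈ (r.gcd n).divisors, f r d =
      ∑ d ∈ Icc 1 M with d ∣ n, ∑ r ∈ Icc 1 M with d ∣ r, f r d := by
  refine sum_comm' fun r d ↦ ?_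
  simp only [mem_Icc, mem_filter, Nat.mem_divisors, Nat.dvd_gcd_iff, ne_eq, Nat.gcd_eq_zero_iff]
  refine ⟨fun ⟨⟨hr, hrM⟩, ⟨hdr, hdn⟩, _⟩ ↦ ?_, fun ⟨⟨hrM, hdr⟩, _, hdn⟩ ↦ ?_⟩
  · exact ⟨⟨⟨hr, hrM⟩, hdr⟩, ⟨Nat.pos_of_dvd_of_pos hdr hr, (Nat.le_of_dvd hr hdr).trans hrM⟩, hdn⟩
  · exact ⟨hrM, ⟨hdr, hdn⟩, fun h ↦ Nat.one_le_iff_ne_zero.1 hrM.1 h.1⟩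

lemma sum_Icc_sum_divisors [AddCommMonoid R] (f : ℕ → ℕ → R) (M : ℕ) :
    ∑ r ∈ Icc 1 M, ∑ d ∈ r.divisors, f r d =
      ∑ d ∈ Icc 1 M, ∑ r ∈ Icc 1 M with d ∣ r, f r d := by
  simpa using sum_Icc_sum_divisors_gcd f M 0

lemma sum_Icc_filter_dvd [AddCommMonoid R] (f : ℕ → R) (M : ℕ) {t : ℕ} (ht : 0 < t) :
    ∑ r ∈ Icc 1 M with t ∣ r, f r = ∑ m ∈ Icc 1 (M / t), f (t * m) := by
  have himage : {r ∈ Icc 1 M | t ∣ r} = (Icc 1 (M / t)).image (t * ·) := by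
    ext r
    simp only [mem_filter, mem_Icc, mem_image, Nat.le_div_iff_mul_le ht]
    constructor
    · rintro ⟨⟨hr, hrM⟩, m, rfl⟩
      exact ⟨m, ⟨Nat.pos_of_mul_pos_left hr, mul_comm t m ▸ hrM⟩, rfl⟩
    · rintro ⟨m, ⟨hm, hmM⟩, rfl⟩
      exact ⟨⟨Nat.mul_pos ht hm, mul_comm t m ▸ hmM⟩, dvd_mul_right t m⟩
  rw [himage, sum_image fun _ _ _ _ h ↦ Nat.eq_of_mul_eq_mul_left ht h]

lemma sum_divisors_mul_filter_dvd [AddCommMonoid R] (f : ℕ → R) {t : ℕ} (ht : 0 < t) (m : ℕ) :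
    ∑ d ∈ (t * m).divisors with t ∣ d, f d = ∑ d ∈ m.divisors, f (t * d) := by
  have himage : {d ∈ (t * m).divisors | t ∣ d} = m.divisors.image (t * ·) := by
    ext d
    simp only [mem_filter, Nat.mem_divisors, mem_image, mul_ne_zero_iff]
    constructor
    · rintro ⟨⟨hdm, _, hm⟩, d, rfl⟩
      exact ⟨d, ⟨Nat.dvd_of_mul_dvd_mul_left ht hdm, hm⟩, rfl⟩
    · rintro ⟨d, ⟨hdm, hm⟩, rfl⟩
      exact ⟨⟨mul_dvd_mul_left t hdm, ht.ne', hm⟩, dvd_mul_right t d⟩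
  rw [himage, sum_image fun _ _ _ _ h ↦ Nat.eq_of_mul_eq_mul_left ht h]

lemma sum_Icc_filter_dvd_filter_dvd [AddCommMonoid R] (f : ℕ → ℕ → R) (M : ℕ) {t : ℕ}
    (ht : 0 < t) :
    ∑ d ∈ Icc 1 M with t ∣ d, ∑ r ∈ Icc 1 M with d ∣ r, f d r =
      ∑ m ∈ Icc 1 (M / t), ∑ d ∈ m.divisors, f (t * d) (t * m) := by
  calc ∑ d ∈ Icc 1 M with t ∣ d, ∑ r ∈ Icc 1 M with d ∣ r, f d r
      = ∑ d ∈ Icc 1 M, ∑ r ∈ Icc 1 M with d ∣ r, if t ∣ d then f d r else 0 := by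
        rw [sum_filter]
        exact sum_congr rfl fun d _ ↦ by split_ifs <;> simp
    _ = ∑ r ∈ Icc 1 M, ∑ d ∈ r.divisors with t ∣ d, f d r := by
        simp only [sum_filter (s := Nat.divisors _)]
        exact (sum_Icc_sum_divisors (fun r d ↦ if t ∣ d then f d r else 0) M).symm
    _ = ∑ r ∈ Icc 1 M with t ∣ r, ∑ d ∈ r.divisors with t ∣ d, f d r := by
        refine (sum_filter_of_ne fun r _ hr ↦ ?_).symm
        obtain ⟨d, hd, -⟩ := exists_ne_zero_of_sum_ne_zero hr
        exact (mem_filter.1 hd).2.trans (Nat.dvd_of_mem_divisors (mem_filter.1 hd).1)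
    _ = ∑ m ∈ Icc 1 (M / t), ∑ d ∈ m.divisors, f (t * d) (t * m) := by
        rw [sum_Icc_filter_dvd _ M ht]
        exact sum_congr rfl fun m _ ↦ sum_divisors_mul_filter_dvd (fun d ↦ f d (t * m)) ht m

lemma sum_sum_mul_sum_divisors_gcd [CommSemiring R] (b g : ℕ → R) (M : ℕ) :
    ∑ d ∈ Icc 1 M, ∑ e ∈ Icc 1 M, b d * b e * ∑ t ∈ (d.gcd e).divisors, g t =
      ∑ t ∈ Icc 1 M, g t * (∑ d ∈ Icc 1 M with t ∣ d, b d) ^ 2 := by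
  calc ∑ d ∈ Icc 1 M, ∑ e ∈ Icc 1 M, b d * b e * ∑ t ∈ (d.gcd e).divisors, g t
      = ∑ e ∈ Icc 1 M, ∑ t ∈ Icc 1 M with t ∣ e, ∑ d ∈ Icc 1 M with t ∣ d, b d * b e * g t := by
        simp only [mul_sum]
        rw [sum_comm]
        exact sum_congr rfl fun e _ ↦ sum_Icc_sum_divisors_gcd (fun d t ↦ b d * b e * g t) M e
    _ = ∑ t ∈ Icc 1 M, ∑ e ∈ Icc 1 M with t ∣ e, ∑ d ∈ Icc 1 M with t ∣ d, b d * b e * g t := by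
        simp only [sum_filter]
        rw [sum_comm]
    _ = ∑ t ∈ Icc 1 M, g t * (∑ d ∈ Icc 1 M with t ∣ d, b d) ^ 2 := by
        refine sum_congr rfl fun t _ ↦ ?_
        rw [sum_comm, sq, sum_mul_sum, mul_comm (g t)]
        simp only [sum_mul]

end DivisorSums

section Correlation

/-- The partial sum `∑ μ²(r)/φ(r)` over the multiples `r ≤ M` of `d`. -/
noncomputable def sieveWeightMultiples (M d : ℕ) : ℝ := ∑ r ∈ Icc 1 M with d ∣ r, sieveWeight r

/-- The coefficients in `λ_R(n) = ∑_{d ≤ R, d ∣ n} lamRCoeff ⌊R⌋₊ d`. -/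
noncomputable def lamRCoeff (M d : ℕ) : ℝ := d * moebius d * sieveWeightMultiples M d

lemma lamR_eq_sum_lamRCoeff (R : ℝ) (n : ℕ) :
    lamR R n = ∑ d ∈ Icc 1 ⌊R⌋₊ with d ∣ n, lamRCoeff ⌊R⌋₊ d := by
  simp only [lamR, moebius_sq_div_totient, lamRCoeff, sieveWeightMultiples, mul_sum]
  rw [sum_Icc_sum_divisors_gcd fun r d ↦ sieveWeight r * ((d : ℝ) * moebius d)]
  simp only [mul_comm (sieveWeight _)]

lemma sum_abs_lamRCoeff_le (M : ℕ) : ∑ d ∈ Icc 1 M, |lamRCoeff M d| ≤ divTotientSqMean * M := by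
  have hmoebius (d : ℕ) : |(moebius d : ℝ)| ≤ 1 := mod_cast abs_moebius_le_one
  have hnonneg (d : ℕ) : 0 ≤ sieveWeightMultiples M d := sum_nonneg fun r _ ↦ sieveWeight_nonneg r
  calc ∑ d ∈ Icc 1 M, |lamRCoeff M d|
      ≤ ∑ d ∈ Icc 1 M, d * sieveWeightMultiples M d := by
        refine sum_le_sum fun d _ ↦ ?_
        rw [lamRCoeff, abs_mul, abs_mul, abs_of_nonneg (hnonneg d), Nat.abs_cast]
        exact mul_le_mul_of_nonneg_right (mul_le_of_le_one_right d.cast_nonneg (hmoebius d))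
          (hnonneg d)
    _ = ∑ r ∈ Icc 1 M, sieveWeight r * ∑ d ∈ r.divisors, (d : ℝ) := by
        simp only [sieveWeightMultiples, mul_sum]
        rw [sum_Icc_sum_divisors fun r d ↦ sieveWeight r * (d : ℝ)]
        simp only [mul_comm (sieveWeight _)]
    _ ≤ ∑ r ∈ Icc 1 M, ((r : ℝ) / r.totient) ^ 2 :=
        sum_le_sum fun r _ ↦ sieveWeight_mul_sum_divisors_le r
    _ ≤ divTotientSqMean * M := sum_div_totient_sq_le M

lemma sum_lamR_mul_lamR_add (R : ℝ) (s : Finset ℕ) (k : ℕ) :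
    ∑ n ∈ s, lamR R n * lamR R (n + k) =
      ∑ d ∈ Icc 1 ⌊R⌋₊, ∑ e ∈ Icc 1 ⌊R⌋₊,
        lamRCoeff ⌊R⌋₊ d * lamRCoeff ⌊R⌋₊ e * #{n ∈ s | d ∣ n ∧ e ∣ n + k} := by
  simp only [lamR_eq_sum_lamRCoeff, sum_filter, sum_mul_sum, card_filter, Nat.cast_sum]
  simp only [mul_sum]
  rw [sum_comm]
  refine sum_congr rfl fun d _ ↦ ?_
  rw [sum_comm]
  refine sum_congr rfl fun e _ ↦ sum_congr rfl fun n _ ↦ ?_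
  by_cases hd : d ∣ n <;> by_cases he : e ∣ n + k <;> simp [hd, he]

lemma abs_sum_lamR_mul_lamR_sub_le (N : ℕ) {q j a : ℕ} (hq : q ≠ 0) (ha : a.Coprime q) {R : ℝ}
    (hR : 0 ≤ R) :
    |∑ n ∈ Icc 1 N with n ≡ a [MOD q], lamR R n * lamR R (n + j * q) -
      N * ∑ d ∈ Icc 1 ⌊R⌋₊, ∑ e ∈ Icc 1 ⌊R⌋₊,
        lamRCoeff ⌊R⌋₊ d * lamRCoeff ⌊R⌋₊ e * shiftDensity q j d e| ≤
      (divTotientSqMean * R) ^ 2 := by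
  have hterm {d e : ℕ} (hd : d ∈ Icc 1 ⌊R⌋₊) (he : e ∈ Icc 1 ⌊R⌋₊) :
      |lamRCoeff ⌊R⌋₊ d * lamRCoeff ⌊R⌋₊ e *
          #{n ∈ Icc 1 N | n ≡ a [MOD q] ∧ d ∣ n ∧ e ∣ n + j * q} -
        N * (lamRCoeff ⌊R⌋₊ d * lamRCoeff ⌊R⌋₊ e * shiftDensity q j d e)| ≤
      |lamRCoeff ⌊R⌋₊ d| * |lamRCoeff ⌊R⌋₊ e| := by
    rw [mul_left_comm, ← mul_sub, abs_mul, abs_mul]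
    exact mul_le_of_le_one_right (by positivity) (abs_card_sub_shiftDensity_le N hq ha
      (Nat.one_le_iff_ne_zero.1 (mem_Icc.1 hd).1) (Nat.one_le_iff_ne_zero.1 (mem_Icc.1 he).1))
  simp only [sum_lamR_mul_lamR_add, filter_filter, mul_sum, ← sum_sub_distrib]
  calc |∑ d ∈ Icc 1 ⌊R⌋₊, ∑ e ∈ Icc 1 ⌊R⌋₊,
        (lamRCoeff ⌊R⌋₊ d * lamRCoeff ⌊R⌋₊ e *
            #{n ∈ Icc 1 N | n ≡ a [MOD q] ∧ d ∣ n ∧ e ∣ n + j * q} -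
          N * (lamRCoeff ⌊R⌋₊ d * lamRCoeff ⌊R⌋₊ e * shiftDensity q j d e))|
      ≤ ∑ d ∈ Icc 1 ⌊R⌋₊, ∑ e ∈ Icc 1 ⌊R⌋₊, |lamRCoeff ⌊R⌋₊ d| * |lamRCoeff ⌊R⌋₊ e| :=
        (abs_sum_le_sum_abs _ _).trans <| sum_le_sum fun d hd ↦
          (abs_sum_le_sum_abs _ _).trans <| sum_le_sum fun e he ↦ hterm hd he
    _ = (∑ d ∈ Icc 1 ⌊R⌋₊, |lamRCoeff ⌊R⌋₊ d|) ^ 2 := by rw [sq, sum_mul_sum]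
    _ ≤ (divTotientSqMean * R) ^ 2 := by
        refine pow_le_pow_left₀ (sum_nonneg fun d _ ↦ abs_nonneg _) ?_ 2
        exact (sum_abs_lamRCoeff_le _).trans
          (mul_le_mul_of_nonneg_left (Nat.floor_le hR) divTotientSqMean_nonneg)

end Correlation

section Diagonalization

/-- The Möbius function restricted to the integers coprime to `q`. -/
noncomputable def coprimeMoebius (q : ℕ) : ArithmeticFunction ℝ :=
  squarefreeExt fun p ↦ if p ∣ q then 0 else -1

/-- The variables `μ(d) A(d)`, for `d` coprime to `q` and `A = sieveWeightMultiples M`, in which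
the main term becomes a quadratic form in `gcd(d, e)`. -/
noncomputable def coprimeCoeff (M q d : ℕ) : ℝ :=
  coprimeMoebius q d * sieveWeightMultiples M d

/-- The coefficients whose sum over the divisors of a squarefree `g` is `g` if `g ∣ j` and `0`
otherwise. -/
noncomputable def gcdCoeff (j : ℕ) : ArithmeticFunction ℝ :=
  squarefreeExt fun p ↦ if p ∣ j then (p : ℝ) - 1 else -1

/-- The partial sum of `∑_{k ∣ q} μ²(k)/φ(k) = q/φ(q)` over `tk ≤ M`. -/
noncomputable def truncDivTotient (M q t : ℕ) : ℝ :=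
  ∑ k ∈ q.divisors with t * k ≤ M, sieveWeight k

lemma sum_divisors_gcdCoeff (j : ℕ) {g : ℕ} (hg : Squarefree g) :
    ∑ t ∈ g.divisors, gcdCoeff j t = if g ∣ j then (g : ℝ) else 0 := by
  rw [gcdCoeff, ← squarefreeExt_one_add _ hg, ← squarefreeExt_natCast hg, ← squarefreeExt_ite_dvd]
  refine squarefreeExt_congr fun p _ _ ↦ ?_
  split_ifs <;> ring

lemma lamRCoeff_mul_lamRCoeff_mul_shiftDensity (M q j : ℕ) {d e : ℕ} (hd : d ≠ 0) (he : e ≠ 0) :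
    lamRCoeff M d * lamRCoeff M e * shiftDensity q j d e =
      (q : ℝ)⁻¹ * (coprimeCoeff M q d * coprimeCoeff M q e *
        ∑ t ∈ (d.gcd e).divisors, gcdCoeff j t) := by
  by_cases hsq : Squarefree d
  swap
  · simp [lamRCoeff, coprimeCoeff, coprimeMoebius, moebius_eq_zero_of_not_squarefree hsq,
      squarefreeExt_of_not_squarefree _ hsq]
  rw [sum_divisors_gcdCoeff j (hsq.squarefree_of_dvd (d.gcd_dvd_left e))]
  simp only [coprimeCoeff, coprimeMoebius, squarefreeExt_ite_dvd_zero, squarefreeExt_neg_one,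
    shiftDensity]
  by_cases h : d.Coprime q ∧ e.Coprime q ∧ d.gcd e ∣ j
  · have hlcm : (d.lcm e : ℝ) ≠ 0 := mod_cast Nat.lcm_ne_zero hd he
    have hgcd : (d.gcd e : ℝ) = d * e * (d.lcm e : ℝ)⁻¹ := by
      rw [eq_mul_inv_iff_mul_eq₀ hlcm]
      exact_mod_cast d.gcd_mul_lcm e
    rw [if_pos h, if_pos h.1, if_pos h.2.1, if_pos h.2.2, hgcd, lamRCoeff, lamRCoeff,
      Nat.cast_mul, mul_inv]
    ring
  · rw [if_neg h, mul_zero]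
    by_cases hdq : d.Coprime q
    · by_cases heq : e.Coprime q
      · have hj : ¬d.gcd e ∣ j := fun hj ↦ h ⟨hdq, heq, hj⟩
        simp [hj]
      · simp [heq]
    · simp [hdq]

lemma sieveWeight_mul_mul_sum_divisors (q t m : ℕ) :
    sieveWeight (t * m) * ∑ d ∈ m.divisors, coprimeMoebius q (t * d) =
      coprimeMoebius q t * sieveWeight t * if m ∣ q then sieveWeight m else 0 := by
  by_cases hm : Squarefree m
  swap
  · have htm : ¬Squarefree (t * m) := fun h ↦ hm (h.squarefree_of_dvd (dvd_mul_left m t))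
    simp [sieveWeight, squarefreeExt_of_not_squarefree _ hm, squarefreeExt_of_not_squarefree _ htm]
  by_cases htm : t.Coprime m
  · have hsum : ∑ d ∈ m.divisors, coprimeMoebius q (t * d) =
        coprimeMoebius q t * squarefreeExt (fun p ↦ 1 + if p ∣ q then 0 else -1) m := by
      rw [squarefreeExt_one_add _ hm, mul_sum]
      exact sum_congr rfl fun d hd ↦ squarefreeExt_mul_of_coprime _
        (htm.coprime_dvd_right (Nat.dvd_of_mem_divisors hd))
    rw [hsum, sieveWeight, squarefreeExt_mul_of_coprime _ htm, ← squarefreeExt_ite_dvd]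
    have hlocal : squarefreeExt (fun p ↦ if p ∣ q then ((p : ℝ) - 1)⁻¹ else 0) m =
        squarefreeExt (fun p ↦ ((p : ℝ) - 1)⁻¹) m *
          squarefreeExt (fun p ↦ 1 + if p ∣ q then (0 : ℝ) else -1) m := by
      rw [squarefreeExt_mul_squarefreeExt]
      refine squarefreeExt_congr fun p _ _ ↦ ?_
      split_ifs <;> ring
    rw [hlocal]
    ring
  · rw [sieveWeight, squarefreeExt_of_not_squarefree _ (mt Nat.coprime_of_squarefree_mul htm),
      zero_mul, coprimeMoebius, squarefreeExt_ite_dvd_zero]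
    split_ifs with htq hmq
    · exact absurd (htq.coprime_dvd_right hmq) htm
    all_goals simp

lemma sum_coprimeCoeff (M : ℕ) {q t : ℕ} (hq : q ≠ 0) (ht : 0 < t) :
    ∑ d ∈ Icc 1 M with t ∣ d, coprimeCoeff M q d =
      coprimeMoebius q t * sieveWeight t * truncDivTotient M q t := by
  have hdivisors : {k ∈ q.divisors | t * k ≤ M} = {m ∈ Icc 1 (M / t) | m ∣ q} := by
    ext k
    simp only [mem_filter, Nat.mem_divisors, mem_Icc, Nat.le_div_iff_mul_le ht, mul_comm t k]
    exact ⟨fun ⟨⟨hkq, _⟩, hk⟩ ↦ ⟨⟨Nat.pos_of_dvd_of_pos hkq (Nat.pos_of_ne_zero hq), hk⟩, hkq⟩,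
      fun ⟨⟨_, hk⟩, hkq⟩ ↦ ⟨⟨hkq, hq⟩, hk⟩⟩
  simp only [coprimeCoeff, sieveWeightMultiples, mul_sum]
  rw [sum_Icc_filter_dvd_filter_dvd (fun d r ↦ coprimeMoebius q d * sieveWeight r) M ht,
    truncDivTotient, hdivisors, sum_filter, mul_sum]
  refine sum_congr rfl fun m _ ↦ ?_
  rw [← sieveWeight_mul_mul_sum_divisors, mul_sum]
  simp only [mul_comm (sieveWeight _)]

lemma gcdCoeff_mul_sq (q j t : ℕ) :
    gcdCoeff j t * (coprimeMoebius q t * sieveWeight t) ^ 2 = singCoeff q j t := by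
  rw [sq, gcdCoeff, coprimeMoebius, sieveWeight, squarefreeExt_mul_squarefreeExt,
    squarefreeExt_mul_squarefreeExt, squarefreeExt_mul_squarefreeExt, singCoeff]
  refine squarefreeExt_congr fun p hp _ ↦ ?_
  have : (p : ℝ) - 1 ≠ 0 := (zero_lt_one.trans_le (one_le_prime_sub_one hp)).ne'
  rw [singLocalCoeff]
  by_cases hpq : p ∣ q
  · simp [hpq]
  · simp only [hpq, if_false]
    split_ifs <;> field_simp

lemma sum_lamRCoeff_mul_shiftDensity (M j : ℕ) {q : ℕ} (hq : q ≠ 0) :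
    ∑ d ∈ Icc 1 M, ∑ e ∈ Icc 1 M, lamRCoeff M d * lamRCoeff M e * shiftDensity q j d e =
      (q : ℝ)⁻¹ * ∑ t ∈ Icc 1 M, singCoeff q j t * truncDivTotient M q t ^ 2 := by
  calc ∑ d ∈ Icc 1 M, ∑ e ∈ Icc 1 M, lamRCoeff M d * lamRCoeff M e * shiftDensity q j d e
      = (q : ℝ)⁻¹ * ∑ d ∈ Icc 1 M, ∑ e ∈ Icc 1 M, coprimeCoeff M q d * coprimeCoeff M q e *
          ∑ t ∈ (d.gcd e).divisors, gcdCoeff j t := by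
        simp only [mul_sum (a := (q : ℝ)⁻¹)]
        exact sum_congr rfl fun d hd ↦ sum_congr rfl fun e he ↦
          lamRCoeff_mul_lamRCoeff_mul_shiftDensity M q j
            (Nat.one_le_iff_ne_zero.1 (mem_Icc.1 hd).1) (Nat.one_le_iff_ne_zero.1 (mem_Icc.1 he).1)
    _ = (q : ℝ)⁻¹ * ∑ t ∈ Icc 1 M, singCoeff q j t * truncDivTotient M q t ^ 2 := by
        rw [sum_sum_mul_sum_divisors_gcd]
        congr 1
        refine sum_congr rfl fun t ht ↦ ?_
        rw [sum_coprimeCoeff M hq (mem_Icc.1 ht).1, mul_pow, ← mul_assoc, gcdCoeff_mul_sq]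

end Diagonalization

section Truncation

lemma truncDivTotient_nonneg (M q t : ℕ) : 0 ≤ truncDivTotient M q t :=
  sum_nonneg fun k _ ↦ sieveWeight_nonneg k

lemma truncDivTotient_le (M t : ℕ) {q : ℕ} (hq : q ≠ 0) :
    truncDivTotient M q t ≤ q / q.totient :=
  sum_divisors_sieveWeight hq ▸
    sum_le_sum_of_subset_of_nonneg (filter_subset _ _) fun k _ _ ↦ sieveWeight_nonneg k

lemma truncDivTotient_eq_zero {M t : ℕ} (q : ℕ) (ht : M < t) : truncDivTotient M q t = 0 := by
  rw [truncDivTotient, filter_false_of_mem, sum_empty]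
  exact fun k hk ↦ not_le.2 (ht.trans_le (Nat.le_mul_of_pos_right t (Nat.pos_of_mem_divisors hk)))

lemma div_totient_sub_truncDivTotient {R : ℝ} (hR : 0 ≤ R) {q : ℕ} (hq : q ≠ 0) (t : ℕ) :
    q / q.totient - truncDivTotient ⌊R⌋₊ q t =
      ∑ k ∈ q.divisors with R / (k : ℕ) < t, sieveWeight k := by
  rw [← sum_divisors_sieveWeight hq, ← sum_filter_not_add_sum_filter _ (fun k : ℕ ↦ R / k < t),
    add_comm, truncDivTotient, add_sub_assoc, add_eq_left, sub_eq_zero]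
  refine sum_congr (filter_congr fun k hk ↦ ?_) fun _ _ ↦ rfl
  rw [not_lt, le_div_iff₀ (mod_cast Nat.pos_of_mem_divisors hk), Nat.le_floor_iff hR, Nat.cast_mul]

lemma abs_mul_truncDivTotient_sq_sub_le {R : ℝ} (hR : 0 ≤ R) {q : ℕ} (hq : q ≠ 0) (t : ℕ) (y : ℝ) :
    |y * truncDivTotient ⌊R⌋₊ q t ^ 2 - (q / q.totient) ^ 2 * y| ≤
      2 * (q / q.totient) *
        ∑ k ∈ q.divisors, sieveWeight k * if R / k < t then |y| else 0 := by
  have hle := truncDivTotient_le ⌊R⌋₊ t hq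
  have hnonneg := truncDivTotient_nonneg ⌊R⌋₊ q t
  calc |y * truncDivTotient ⌊R⌋₊ q t ^ 2 - (q / q.totient) ^ 2 * y|
      = (q / q.totient + truncDivTotient ⌊R⌋₊ q t) *
          ((q / q.totient - truncDivTotient ⌊R⌋₊ q t) * |y|) := by
        rw [show y * truncDivTotient ⌊R⌋₊ q t ^ 2 - (q / q.totient) ^ 2 * y =
          -((q / q.totient + truncDivTotient ⌊R⌋₊ q t) *
            ((q / q.totient - truncDivTotient ⌊R⌋₊ q t) * y)) by ring,
          abs_neg, abs_mul, abs_mul, abs_of_nonneg (by linarith), abs_of_nonneg (sub_nonneg.2 hle)]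
    _ ≤ 2 * (q / q.totient) * ((q / q.totient - truncDivTotient ⌊R⌋₊ q t) * |y|) :=
        mul_le_mul_of_nonneg_right (by linarith)
          (mul_nonneg (sub_nonneg.2 hle) (abs_nonneg y))
    _ = 2 * (q / q.totient) *
          ∑ k ∈ q.divisors, sieveWeight k * if R / k < t then |y| else 0 := by
        rw [div_totient_sub_truncDivTotient hR hq, sum_mul, sum_filter]
        simp only [mul_ite, mul_zero]

lemma sum_range_abs_singCoeff_mul_truncDivTotient_sq_sub_le {q j : ℕ} (hq : q ≠ 0) (hj : j ≠ 0)
    {R : ℝ} (hR : 0 < R) (T : ℕ) :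
    ∑ t ∈ range T, |singCoeff q j t * truncDivTotient ⌊R⌋₊ q t ^ 2 -
        (q / q.totient) ^ 2 * singCoeff q j t| ≤
      4 * divTotientSqMean * (q / q.totient) * gGY q / R * (j * j.divisors.card / j.totient) := by
  calc ∑ t ∈ range T, |singCoeff q j t * truncDivTotient ⌊R⌋₊ q t ^ 2 -
        (q / q.totient) ^ 2 * singCoeff q j t|
      ≤ ∑ t ∈ range T, 2 * (q / q.totient) *
          ∑ k ∈ q.divisors, sieveWeight k * if R / k < t then |singCoeff q j t| else 0 :=
        sum_le_sum fun t _ ↦ abs_mul_truncDivTotient_sq_sub_le hR.le hq t _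
    _ = 2 * (q / q.totient) * ∑ k ∈ q.divisors, sieveWeight k *
          ∑ t ∈ range T, if R / k < t then |singCoeff q j t| else 0 := by
        rw [← mul_sum, sum_comm]
        simp only [mul_sum]
    _ ≤ 2 * (q / q.totient) * ∑ k ∈ q.divisors, sieveWeight k *
          (2 * divTotientSqMean / (R / k) * (j * j.divisors.card / j.totient)) := by
        refine mul_le_mul_of_nonneg_left (sum_le_sum fun k hk ↦ ?_) (by positivity)
        have : (0 : ℝ) < k := mod_cast Nat.pos_of_mem_divisors hk
        exact mul_le_mul_of_nonneg_left
          (sum_range_abs_singCoeff_tail_le q hj (by positivity) T) (sieveWeight_nonneg k)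
    _ = 4 * divTotientSqMean * (q / q.totient) * gGY q / R *
          (j * j.divisors.card / j.totient) := by
        rw [← sum_divisors_sieveWeight_mul hq, mul_sum, mul_sum, sum_div, sum_mul]
        refine sum_congr rfl fun k _ ↦ ?_
        rw [div_div_eq_mul_div]
        ring

lemma abs_sum_singCoeff_mul_truncDivTotient_sq_sub_le {q j : ℕ} (hq : q ≠ 0) (hj : j ≠ 0) {R : ℝ}
    (hR : 0 < R) :
    |∑ t ∈ Icc 1 ⌊R⌋₊, singCoeff q j t * truncDivTotient ⌊R⌋₊ q t ^ 2 -
        (q / q.totient) ^ 2 * ∑' t, singCoeff q j t| ≤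
      4 * divTotientSqMean * (q / q.totient) * gGY q / R * (j * j.divisors.card / j.totient) := by
  have hsupport (t : ℕ) (ht : t ∉ Icc 1 ⌊R⌋₊) :
      singCoeff q j t * truncDivTotient ⌊R⌋₊ q t ^ 2 = 0 := by
    rcases t.eq_zero_or_pos with rfl | ht0
    · rw [(singCoeff q j).map_zero, zero_mul]
    · have htM : ⌊R⌋₊ < t := not_le.1 fun h ↦ ht (mem_Icc.2 ⟨ht0, h⟩)
      rw [truncDivTotient_eq_zero q htM, zero_pow two_ne_zero, mul_zero]
  have hpartial := sum_range_abs_singCoeff_mul_truncDivTotient_sq_sub_le hq hj hR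
  simp only [← Real.norm_eq_abs] at hpartial ⊢
  rw [← tsum_eq_sum (L := .unconditional _) hsupport, ← tsum_mul_left,
    ← (summable_of_ne_finset_zero hsupport).tsum_sub ((summable_singCoeff q hj).mul_left _)]
  exact (norm_tsum_le_tsum_norm (summable_of_sum_range_le (fun _ ↦ norm_nonneg _) hpartial)).trans
    (Real.tsum_le_of_sum_range_le (fun _ ↦ norm_nonneg _) hpartial)

end Truncation

section MainTerm

lemma abs_sum_lamR_mul_lamR_sub_singSeries_le (N : ℕ) {q j a : ℕ} (hq : q ≠ 0) (hj : j ≠ 0)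
    (ha : a.Coprime q) {R : ℝ} (hR : 0 < R) :
    |∑ n ∈ Icc 1 N with n ≡ a [MOD q], lamR R n * lamR R (n + j * q) -
        N / q.totient * singSeries (j * q)| ≤
      4 * divTotientSqMean * (N * gGY q / (q.totient * R) * (j * j.divisors.card / j.totient)) +
        (divTotientSqMean * R) ^ 2 := by
  set S := ∑ n ∈ Icc 1 N with n ≡ a [MOD q], lamR R n * lamR R (n + j * q)
  set Q := ∑ t ∈ Icc 1 ⌊R⌋₊, singCoeff q j t * truncDivTotient ⌊R⌋₊ q t ^ 2
  have hcount : |S - N * ((q : ℝ)⁻¹ * Q)| ≤ (divTotientSqMean * R) ^ 2 :=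
    sum_lamRCoeff_mul_shiftDensity ⌊R⌋₊ j hq ▸ abs_sum_lamR_mul_lamR_sub_le N hq ha hR.le
  have htrunc := abs_sum_singCoeff_mul_truncDivTotient_sq_sub_le hq hj hR
  have : (q : ℝ) ≠ 0 := mod_cast hq
  calc |S - N / q.totient * singSeries (j * q)|
      = |N / q * (Q - (q / q.totient) ^ 2 * ∑' t, singCoeff q j t) +
          (S - N * ((q : ℝ)⁻¹ * Q))| := by
        rw [singSeries_mul_eq hq hj]
        congr 1
        field_simp
        ring
    _ ≤ N / q * |Q - (q / q.totient) ^ 2 * ∑' t, singCoeff q j t| +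
          |S - N * ((q : ℝ)⁻¹ * Q)| := by
        refine (abs_add_le _ _).trans_eq ?_
        rw [abs_mul, abs_of_nonneg (by positivity)]
    _ ≤ N / q * (4 * divTotientSqMean * (q / q.totient) * gGY q / R *
          (j * j.divisors.card / j.totient)) + (divTotientSqMean * R) ^ 2 := by
        gcongr
    _ = 4 * divTotientSqMean * (N * gGY q / (q.totient * R) * (j * j.divisors.card / j.totient)) +
          (divTotientSqMean * R) ^ 2 := by
        field_simp

end MainTerm

theorem prop4_lamR_correlation :
    ∃ C : ℝ, 0 < C ∧ ∀ (N q j a : ℕ) (R : ℝ),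
      1 ≤ N → 1 ≤ q → 1 ≤ j → Nat.gcd a q = 1 → 2 ≤ R →
      |(∑ n ∈ (Finset.Icc 1 N).filter (fun n : ℕ => (n : ZMod q) = (a : ZMod q)),
          lamR R n * lamR R (n + j * q))
        - ((N : ℝ) / (q.totient : ℝ)) * singSeries (j * q)|
      ≤ C * (((N : ℝ) * gGY q / ((q.totient : ℝ) * R))
            * ((j : ℝ) * (j.divisors.card : ℝ) / (j.totient : ℝ)) + R ^ 2) := by
  have hmean := divTotientSqMean_nonneg
  refine ⟨4 * divTotientSqMean + divTotientSqMean ^ 2 + 1, by positivity, ?_⟩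
  intro N q j a R _ hq hj ha hR
  simp only [ZMod.natCast_eq_natCast_iff]
  have hbound := abs_sum_lamR_mul_lamR_sub_singSeries_le N (Nat.one_le_iff_ne_zero.1 hq)
    (Nat.one_le_iff_ne_zero.1 hj) ha (zero_lt_two.trans_le hR)
  have hgGY := gGY_nonneg q
  refine hbound.trans ?_
  rw [mul_add, mul_pow]
  gcongr <;> linarith [sq_nonneg divTotientSqMean]
end
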